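/- Fullerenes have no 4-belts. -/

import Mathlib

open Set

noncomputable section

/-- The ambient space `ℝ³`. -/
abbrev E3 := EuclideanSpace ℝ (Fin 3)

/-- The cyclic successor in `Fin k`. -/
def nxt {k : ℕ} (i : Fin k) : Fin k := ⟨(i.1 + 1) % k, Nat.mod_lt _ i.pos⟩

/-- The cyclic predecessor in `Fin k`. -/
def prv {k : ℕ} (i : Fin k) : Fin k := ⟨(i.1 + (k - 1)) % k, Nat.mod_lt _ i.pos⟩

/-- A convex polytope in `ℝ³`: the convex hull of a finite set of points. -/
def IsPolytope (P : Set E3) : Prop := ∃ V : Finset E3, P = convexHull ℝ (V : Set E3)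

/-- The dimension of a subset of `ℝ³` (the dimension of its affine hull). -/
def setDim (A : Set E3) : ℕ := Module.finrank ℝ ↥(vectorSpan ℝ A)

/-- A face of a polytope: a nonempty closed convex extreme subset. -/
def IsFaceOf (F P : Set E3) : Prop :=
  F.Nonempty ∧ IsClosed F ∧ Convex ℝ F ∧ IsExtreme ℝ P F

/-- A facet: a `2`-dimensional face. -/
def IsFacetOf (F P : Set E3) : Prop := IsFaceOf F P ∧ setDim F = 2

/-- An edge: a `1`-dimensional face. -/
def IsEdgeOf (F P : Set E3) : Prop := IsFaceOf F P ∧ setDim F = 1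

/-- A vertex: a point whose singleton is a face. -/
def IsVertexOf (v : E3) (P : Set E3) : Prop := IsFaceOf {v} P

/-- The set of facets of `P`. -/
def facets (P : Set E3) : Set (Set E3) := {F | IsFacetOf F P}

/-- A simple 3-polytope: a 3-dimensional convex polytope each of whose vertices
is contained in exactly 3 facets. -/
def IsSimplePolytope3 (P : Set E3) : Prop :=
  IsPolytope P ∧ setDim P = 3 ∧
    ∀ v : E3, IsVertexOf v P → {F | IsFacetOf F P ∧ v ∈ F}.ncard = 3

/-- The number of edges of a facet `F` of `P`. -/
def facetEdges (P F : Set E3) : ℕ := {e | IsEdgeOf e P ∧ e ⊆ F}.ncard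

/-- `pVec P k` is the number of `k`-gonal facets of `P`. -/
def pVec (P : Set E3) (k : ℕ) : ℕ := {F | IsFacetOf F P ∧ facetEdges P F = k}.ncard

/-- A (mathematical) fullerene: a simple 3-polytope with all facets pentagons
and hexagons. -/
def IsFullerene (P : Set E3) : Prop :=
  IsSimplePolytope3 P ∧ ∀ F, IsFacetOf F P → facetEdges P F = 5 ∨ facetEdges P F = 6

/-- A `k`-loop in `P` (`k ≥ 2`): a cyclic sequence of facets in which
(cyclically) consecutive facets intersect in an edge; a `1`-loop is a single facet. -/
def IsLoop (P : Set E3) {k : ℕ} (L : Fin k → Set E3) : Prop :=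
  0 < k ∧ (∀ i, IsFacetOf (L i) P) ∧ (2 ≤ k → ∀ i, IsEdgeOf (L i ∩ L (nxt i)) P)

/-- A simple loop: a loop with pairwise different facets. -/
def IsSimpleLoop (P : Set E3) {k : ℕ} (L : Fin k → Set E3) : Prop :=
  IsLoop P L ∧ Function.Injective L

/-- A `k`-belt (`k ≥ 3`): a `k`-loop such that for `k = 3` the three facets have empty
total intersection, and for `k ≥ 4` two facets intersect iff they are cyclically successive. -/
def IsBelt (P : Set E3) {k : ℕ} (L : Fin k → Set E3) : Prop :=
  3 ≤ k ∧ IsLoop P L ∧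
    (k = 3 → ∀ i, L i ∩ L (nxt i) ∩ L (nxt (nxt i)) = ∅) ∧
    (4 ≤ k → ∀ p q, p ≠ q → ((L p ∩ L q).Nonempty ↔ q = nxt p ∨ p = nxt q))

/-- A flag 3-polytope: a simple 3-polytope different from the tetrahedron
(i.e. not having exactly 4 facets) without 3-belts. -/
def IsFlag3Polytope (P : Set E3) : Prop :=
  IsSimplePolytope3 P ∧ (facets P).ncard ≠ 4 ∧ ∀ B : Fin 3 → Set E3, ¬ IsBelt P B

/-- `γ` is the simple edge-cycle of `P` traced by the cyclically ordered distinct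
vertices `v 0, …, v (n-1)` (`n ≥ 3`), consecutive ones joined by edges of `P`. -/
def IsSimpleEdgeCycleVia (P γ : Set E3) {n : ℕ} (v : Fin n → E3) : Prop :=
  3 ≤ n ∧ Function.Injective v ∧ (∀ i, IsVertexOf (v i) P) ∧
    (∀ i, IsEdgeOf (segment ℝ (v i) (v (nxt i))) P) ∧
    γ = ⋃ i, segment ℝ (v i) (v (nxt i))

/-- A simple edge-cycle in the graph of `P`. -/
def IsSimpleEdgeCycle (P γ : Set E3) : Prop :=
  ∃ (n : ℕ) (v : Fin n → E3), IsSimpleEdgeCycleVia P γ v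

/-- `C` is a connected component of the set `A`. -/
def IsCompOf (C A : Set E3) : Prop := ∃ x ∈ A, C = connectedComponentIn A x

/-- The loop `L` is obtained by walking round the simple edge-cycle `γ` inside the
connected component `C` of `∂P ∖ γ`: the facets of `L` lie on the side `C`, and the
edges of `γ`, in cyclic order, lie in the facets of `L` in cyclic order (the loop
index advancing exactly when the facet changes, and making exactly one turn). -/
def WalksRound (P γ C : Set E3) {k : ℕ} (L : Fin k → Set E3) : Prop :=
  IsLoop P L ∧ (∀ i, intrinsicInterior ℝ (L i) ⊆ C) ∧
    ∃ (n : ℕ) (v : Fin n → E3) (φ : Fin n → Fin k),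
      IsSimpleEdgeCycleVia P γ v ∧
      (∀ i, segment ℝ (v i) (v (nxt i)) ⊆ L (φ i)) ∧
      (∀ i, φ (nxt i) = φ i ∨ φ (nxt i) = nxt (φ i)) ∧
      Function.Surjective φ ∧
      (2 ≤ k → (Finset.univ.filter (fun i : Fin n => φ (nxt i) ≠ φ i)).card = k)

/-- Two loops border each other: they are obtained by walking round the same simple
edge-cycle `γ` in the two different connected components of `∂P ∖ γ`. -/
def Borders (P : Set E3) {k₁ k₂ : ℕ} (L₁ : Fin k₁ → Set E3) (L₂ : Fin k₂ → Set E3) : Prop :=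
  ∃ γ C₁ C₂ : Set E3, IsCompOf C₁ (frontier P \ γ) ∧ IsCompOf C₂ (frontier P \ γ) ∧
    C₁ ≠ C₂ ∧ WalksRound P γ C₁ L₁ ∧ WalksRound P γ C₂ L₂

/-- A loop surrounds the facet `F` if it borders the `1`-loop `(F)`. -/
def Surrounds (P : Set E3) {k : ℕ} (L : Fin k → Set E3) (F : Set E3) : Prop :=
  IsFacetOf F P ∧ Borders P L (fun _ : Fin 1 => F)

/-- The number of edges of `P` lying in the facet `F` and in the set `γ`. -/
def edgesInCommon (P F γ : Set E3) : ℕ := {e | IsEdgeOf e P ∧ e ⊆ F ∧ e ⊆ γ}.ncard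
/-- A simple 3-polytope all of whose facets are pentagons and hexagons except for
at most one exceptional facet, which is a quadrangle or a heptagon. -/
def IsAlmostFullerene (P : Set E3) : Prop :=
  IsSimplePolytope3 P ∧
    (∀ F, IsFacetOf F P → facetEdges P F ∈ ({4, 5, 6, 7} : Set ℕ)) ∧
    {F | IsFacetOf F P ∧ (facetEdges P F = 4 ∨ facetEdges P F = 7)}.ncard ≤ 1

/-- The (combinatorial) dodecahedron: a simple 3-polytope with all facets pentagons. -/
def IsDodecahedron (P : Set E3) : Prop :=
  IsSimplePolytope3 P ∧ ∀ F, IsFacetOf F P → facetEdges P F = 5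

/-- `e` and `e'` are opposite edges of the hexagonal facet `H`: they are disjoint and no
edge of `H` meets both of them. -/
def OppositeEdges (P H e e' : Set E3) : Prop :=
  IsEdgeOf e P ∧ IsEdgeOf e' P ∧ e ⊆ H ∧ e' ⊆ H ∧ e ∩ e' = ∅ ∧
    ∀ e'', IsEdgeOf e'' P → e'' ⊆ H → (e'' ∩ e).Nonempty → e'' ≠ e → e'' ∩ e' = ∅

/-- A cap: a pentagonal facet `F₀` together with a surrounding 5-belt of pentagons. -/
def IsCapOf (P F₀ : Set E3) (L : Fin 5 → Set E3) : Prop :=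
  IsFacetOf F₀ P ∧ facetEdges P F₀ = 5 ∧ (∀ i, facetEdges P (L i) = 5) ∧
    IsBelt P L ∧ Surrounds P L F₀

/-- The number of 5-belts of `P` (counted as sets of facets). -/
def fiveBeltCount (P : Set E3) : ℕ :=
  {S : Set (Set E3) | ∃ B : Fin 5 → Set E3, IsBelt P B ∧ S = Set.range B}.ncard

/-- The structure of the `k`-th fullerene of Family I: two caps separated by `k`
hexagonal 5-belts, each bordering the next (for `k = 0` the caps border each other,
giving the dodecahedron). -/
def FamilyI (P : Set E3) (k : ℕ) : Prop :=
  ∃ (F₀ F₀' : Set E3) (L L' : Fin 5 → Set E3) (B : ℕ → Fin 5 → Set E3),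
    IsCapOf P F₀ L ∧ IsCapOf P F₀' L' ∧
    (∀ i < k, IsBelt P (B i) ∧ ∀ j, facetEdges P (B i j) = 6) ∧
    (∀ i, i + 1 < k → Borders P (B i) (B (i + 1))) ∧
    (0 < k → Borders P L (B 0) ∧ Borders P (B (k - 1)) L') ∧
    (k = 0 → Borders P L L') ∧
    facets P = {F₀, F₀'} ∪ Set.range L ∪ Set.range L' ∪ ⋃ i ∈ Set.Iio k, Set.range (B i)

/-- `P` is obtained from `Q` by an `(s,k;t₀,t₁)`-truncation with new edge `Enew`:
`P` is cut off from `Q` by a halfspace `{f ≤ c}` whose boundary plane crosses exactly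
two edges `E₀ ≠ E₁` of a `k`-gonal facet `F` of `Q`, cutting off exactly `s` vertices,
all belonging to `F`; `G₀` and `G₁` are the facets meeting `F` along `E₀` and `E₁`, and
they are `t₀`- and `t₁`-gons; `Enew` is the new edge dividing `F`. -/
def IsTruncation (s k t₀ t₁ : ℕ) (Q P Enew : Set E3) : Prop :=
  IsSimplePolytope3 Q ∧ IsSimplePolytope3 P ∧
    ∃ (F E₀ E₁ G₀ G₁ : Set E3) (f : E3 →ₗ[ℝ] ℝ) (c : ℝ),
      IsFacetOf F Q ∧ facetEdges Q F = k ∧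
      IsEdgeOf E₀ Q ∧ IsEdgeOf E₁ Q ∧ E₀ ≠ E₁ ∧ E₀ ⊆ F ∧ E₁ ⊆ F ∧
      IsFacetOf G₀ Q ∧ IsFacetOf G₁ Q ∧ G₀ ≠ F ∧ G₁ ≠ F ∧ E₀ ⊆ G₀ ∧ E₁ ⊆ G₁ ∧
      facetEdges Q G₀ = t₀ ∧ facetEdges Q G₁ = t₁ ∧
      P = Q ∩ {x | f x ≤ c} ∧
      (∀ e, IsEdgeOf e Q → (∃ x ∈ e, c < f x) → (∃ x ∈ e, f x < c) → e = E₀ ∨ e = E₁) ∧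
      (∃ x ∈ E₀, c < f x) ∧ (∃ x ∈ E₀, f x < c) ∧
      (∃ x ∈ E₁, c < f x) ∧ (∃ x ∈ E₁, f x < c) ∧
      (∀ v, IsVertexOf v Q → f v ≠ c) ∧
      {v | IsVertexOf v Q ∧ c < f v}.ncard = s ∧
      (∀ v, IsVertexOf v Q → c < f v → v ∈ F) ∧
      Enew = F ∩ {x | f x = c}

/-- Combinatorial equivalence of polytopes: an inclusion-preserving bijection
between the sets of faces. -/
def CombEquiv (P Q : Set E3) : Prop :=
  ∃ φ : {A : Set E3 // IsFaceOf A P} ≃ {A : Set E3 // IsFaceOf A Q},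
    ∀ A B : {A : Set E3 // IsFaceOf A P}, A.1 ⊆ B.1 ↔ (φ A).1 ⊆ (φ B).1

/-- Combinatorial equivalence sending the face `Ep` of `P` to the face `Eq` of `Q`. -/
def CombEquivMapping (P Q Ep Eq : Set E3) : Prop :=
  ∃ φ : {A : Set E3 // IsFaceOf A P} ≃ {A : Set E3 // IsFaceOf A Q},
    (∀ A B : {A : Set E3 // IsFaceOf A P}, A.1 ⊆ B.1 ↔ (φ A).1 ⊆ (φ B).1) ∧
    ∀ h : IsFaceOf Ep P, ((φ ⟨Ep, h⟩) : {A : Set E3 // IsFaceOf A Q}).1 = Eq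

/-- The straightening of `P` along the edge `E` is defined: `P` is combinatorially
obtained from some simple 3-polytope `Q` by an `(s,k)`-truncation whose new edge
corresponds to `E`. -/
def StraighteningDefined (P E : Set E3) : Prop :=
  ∃ (s k t₀ t₁ : ℕ) (Q P₁ E₁ : Set E3),
    IsTruncation s k t₀ t₁ Q P₁ E₁ ∧ CombEquivMapping P P₁ E E₁

/-- `P` is obtained from `Q` by one of the truncations
`(1;4,5)`, `(1;5,5)`, `(2,6;4,5)`, `(2,6;5,5)`, `(2,6;5,6)`, `(2,7;5,5)`, `(2,7;5,6)`. -/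
def FullereneStep (Q P : Set E3) : Prop :=
  ∃ (s k t₀ t₁ : ℕ) (Enew : Set E3), IsTruncation s k t₀ t₁ Q P Enew ∧
    ((s = 1 ∧ (({t₀, t₁} : Finset ℕ) = {4, 5} ∨ ({t₀, t₁} : Finset ℕ) = {5, 5})) ∨
     (s = 2 ∧ k = 6 ∧ (({t₀, t₁} : Finset ℕ) = {4, 5} ∨ ({t₀, t₁} : Finset ℕ) = {5, 5} ∨
        ({t₀, t₁} : Finset ℕ) = {5, 6})) ∨
     (s = 2 ∧ k = 7 ∧ (({t₀, t₁} : Finset ℕ) = {5, 5} ∨ ({t₀, t₁} : Finset ℕ) = {5, 6})))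

/-!
A generic linear height function has exactly one lowest and one highest vertex on the polytope and
on each facet. At a vertex where `k` of the three edges ascend, `k.choose 2` facets have their
lowest and `(3 - k).choose 2` their highest vertex, and adding this up over all vertices gives
Euler's formula. By linear algebra modulo 2, Euler's formula makes every set of edges that meets
each facet evenly an edge cut.

The `k` edges between consecutive facets of a `k`-belt are pairwise disjoint, so they form an edge
cut with at least `k` vertices on each side. Suppose a cut of this kind has the fewest possible
edges, say `k`. Counting edges around the facets inside a side `A` expresses the number of
pentagons there as `6 + collar A - 2 * k`, while the collars of the two sides add up to at most
`4 * k`; so one of the sides has `collar A ≤ 2 * k`. If `A` still has more vertices than outgoing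
edges after peeling off the facets that cross the cut, what is left is a smaller side with the same
two properties. Taking `A` smallest, this stops, and the counts leave no room for `k ≤ 4`.
-/

section Combinatorics

open scoped Classical Finset

variable {V E F : Type*} [Fintype V] [Fintype E] [Fintype F]

/-- The incidences between the vertices, edges and facets of a simple 3-polytope. All four
cardinalities record that three edges and three facets come together at each vertex; the facets
through a vertex `v` are those having an edge through `v`. -/
structure CubicMap (V E F : Type*) [Fintype V] [Fintype E] [Fintype F] where
  /-- The two vertices of an edge. -/
  ends : E → Finset V
  /-- The two facets along an edge. -/
  sides : E → Finset F
  card_ends : ∀ e, #(ends e) = 2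
  card_sides : ∀ e, #(sides e) = 2
  card_star : ∀ v, #{e | v ∈ ends e} = 3
  card_corner : ∀ v f, (∃ e, v ∈ ends e ∧ f ∈ sides e) → #{e | v ∈ ends e ∧ f ∈ sides e} = 2
  exists_mem_sides : ∀ f, ∃ e, f ∈ sides e

namespace CubicMap

variable (C : CubicMap V E F) {A : Finset V} {v : V} {e : E} {f : F}

/-- The edges of a facet. -/
def boundary (f : F) : Finset E := {e | f ∈ C.sides e}

/-- The vertices of a facet. -/
def corners (f : F) : Finset V := {v | ∃ e, v ∈ C.ends e ∧ f ∈ C.sides e}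

/-- The edges with both ends in `A`. -/
def innerEdges (A : Finset V) : Finset E := {e | C.ends e ⊆ A}

/-- The edge cut of `A`: the edges joining `A` to its complement. -/
def cut (A : Finset V) : Finset E := {e | ¬ C.ends e ⊆ A ∧ ¬ C.ends e ⊆ Aᶜ}

/-- The facets with all vertices in `A`. -/
def innerFacets (A : Finset V) : Finset F := {f | C.corners f ⊆ A}

/-- The facets with vertices both in `A` and in its complement. -/
def crossingFacets (A : Finset V) : Finset F := {f | ¬ C.corners f ⊆ A ∧ ¬ C.corners f ⊆ Aᶜ}

/-- The collar number of `A`: the number of pairs of a facet crossing the edge cut of `A` and an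
edge of that facet inside `A`. -/
def collar (A : Finset V) : ℕ :=
  ∑ f ∈ C.crossingFacets A, #{e ∈ C.innerEdges A | f ∈ C.sides e}

/-- The core of `A`: the vertices of `A` left after peeling off the facets that cross its edge
cut. -/
def core (A : Finset V) : Finset V := {v ∈ A | ∀ f ∈ C.crossingFacets A, v ∉ C.corners f}

variable {C}

lemma mem_boundary : e ∈ C.boundary f ↔ f ∈ C.sides e := by simp [boundary]

lemma mem_corners : v ∈ C.corners f ↔ ∃ e, v ∈ C.ends e ∧ f ∈ C.sides e := by simp [corners]

lemma mem_innerEdges : e ∈ C.innerEdges A ↔ C.ends e ⊆ A := by simp [innerEdges]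

lemma mem_cut : e ∈ C.cut A ↔ (∃ v ∈ C.ends e, v ∈ A) ∧ ∃ v ∈ C.ends e, v ∉ A := by
  simp [cut, Finset.not_subset, and_comm]

lemma mem_innerFacets : f ∈ C.innerFacets A ↔ C.corners f ⊆ A := by simp [innerFacets]

lemma mem_crossingFacets :
    f ∈ C.crossingFacets A ↔ (∃ v ∈ C.corners f, v ∈ A) ∧ ∃ v ∈ C.corners f, v ∉ A := by
  simp [crossingFacets, Finset.not_subset, and_comm]

lemma mem_core : v ∈ C.core A ↔ v ∈ A ∧ ∀ f ∈ C.crossingFacets A, v ∉ C.corners f := by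
  simp [core]

lemma core_subset : C.core A ⊆ A := Finset.filter_subset _ _

lemma ends_subset_corners (h : f ∈ C.sides e) : C.ends e ⊆ C.corners f :=
  fun _ hv => mem_corners.2 ⟨e, hv, h⟩

variable (C)

lemma cut_compl (A : Finset V) : C.cut Aᶜ = C.cut A := by
  ext e; simp only [mem_cut, Finset.mem_compl, not_not]; tauto

lemma crossingFacets_compl (A : Finset V) : C.crossingFacets Aᶜ = C.crossingFacets A := by
  ext f; simp only [mem_crossingFacets, Finset.mem_compl, not_not]; tauto

lemma ends_nonempty (e : E) : (C.ends e).Nonempty :=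
  Finset.card_pos.1 (by rw [C.card_ends]; norm_num)

lemma sides_nonempty (e : E) : (C.sides e).Nonempty :=
  Finset.card_pos.1 (by rw [C.card_sides]; norm_num)

lemma sides_eq_pair {g : F} (hf : f ∈ C.sides e) (hg : g ∈ C.sides e) (hfg : f ≠ g) :
    C.sides e = {f, g} := by
  refine (Finset.eq_of_subset_of_card_le ?_ ?_).symm
  · simp [Finset.insert_subset_iff, hf, hg]
  · rw [C.card_sides, Finset.card_pair hfg]

lemma corners_nonempty (f : F) : (C.corners f).Nonempty :=
  have ⟨e, he⟩ := C.exists_mem_sides f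
  (C.ends_nonempty e).mono (ends_subset_corners he)

lemma exists_mem_ends (v : V) : ∃ e, v ∈ C.ends e := by
  obtain ⟨e, he⟩ := Finset.card_pos.1 ((C.card_star v).symm ▸ three_pos)
  exact ⟨e, by simpa using he⟩

lemma mem_crossingFacets_of_mem_cut (he : e ∈ C.cut A) (hf : f ∈ C.sides e) :
    f ∈ C.crossingFacets A := by
  obtain ⟨⟨v, hv, hvA⟩, w, hw, hwA⟩ := mem_cut.1 he
  exact mem_crossingFacets.2
    ⟨⟨v, ends_subset_corners hf hv, hvA⟩, w, ends_subset_corners hf hw, hwA⟩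

/-! ### Counting incidences -/

lemma sum_card_filter_comm {α β : Type*} (s : Finset α) (t : Finset β) (r : α → β → Prop)
    [∀ a b, Decidable (r a b)] :
    ∑ a ∈ s, #{b ∈ t | r a b} = ∑ b ∈ t, #{a ∈ s | r a b} :=
  Finset.sum_card_bipartiteAbove_eq_sum_card_bipartiteBelow r

lemma sum_eq_inside_add_crossing_add_outside {α M : Type*} [AddCommMonoid M] {S : α → Finset V}
    (hS : ∀ x, (S x).Nonempty) (A : Finset V) (T : Finset α) (g : α → M) :
    ∑ x ∈ T, g x = ∑ x ∈ T with S x ⊆ A, g x + ∑ x ∈ T with ¬ S x ⊆ A ∧ ¬ S x ⊆ Aᶜ, g x +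
      ∑ x ∈ T with S x ⊆ Aᶜ, g x := by
  simp only [Finset.sum_filter, ← Finset.sum_add_distrib]
  refine Finset.sum_congr rfl fun x _ => ?_
  have hdisj : S x ⊆ A → ¬ S x ⊆ Aᶜ := fun h h' =>
    have ⟨v, hv⟩ := hS x
    Finset.mem_compl.1 (h' hv) (h hv)
  by_cases h : S x ⊆ A
  · simp [h, hdisj h]
  · by_cases h' : S x ⊆ Aᶜ <;> simp [h, h']

lemma sum_card_star_eq (A : Finset V) (T : Finset E) :
    ∑ v ∈ A, #{e ∈ T | v ∈ C.ends e} =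
      2 * #{e ∈ T | e ∈ C.innerEdges A} + #{e ∈ T | e ∈ C.cut A} := by
  rw [sum_card_filter_comm, Finset.card_filter _ T, Finset.card_filter _ T, Finset.mul_sum,
    ← Finset.sum_add_distrib]
  refine Finset.sum_congr rfl fun e _ => ?_
  obtain ⟨u, w, huw, he⟩ := Finset.card_eq_two.1 (C.card_ends e)
  have hA : ({v ∈ A | v ∈ C.ends e} : Finset V) = {v ∈ C.ends e | v ∈ A} := by
    ext v; simp [and_comm]
  rw [hA]
  by_cases hu : u ∈ A <;> by_cases hw : w ∈ A <;>
    simp [mem_innerEdges, cut, he, Finset.insert_subset_iff, Finset.filter_insert,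
      Finset.filter_singleton, hu, hw, huw]

lemma two_mul_card_innerEdges_add_card_cut (A : Finset V) :
    2 * #(C.innerEdges A) + #(C.cut A) = 3 * #A := by
  have h := C.sum_card_star_eq A Finset.univ
  simp only [C.card_star, Finset.sum_const, smul_eq_mul, Finset.filter_univ_mem] at h
  omega

lemma card_edges_eq (A : Finset V) :
    Fintype.card E = #(C.innerEdges A) + #(C.cut A) + #(C.innerEdges Aᶜ) := by
  simpa [innerEdges, cut] using
    sum_eq_inside_add_crossing_add_outside C.ends_nonempty A Finset.univ fun _ => (1 : ℕ)

lemma card_facets_eq (A : Finset V) :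
    Fintype.card F = #(C.innerFacets A) + #(C.crossingFacets A) + #(C.innerFacets Aᶜ) := by
  simpa [innerFacets, crossingFacets] using
    sum_eq_inside_add_crossing_add_outside C.corners_nonempty A Finset.univ fun _ => (1 : ℕ)

lemma sum_card_boundary_innerFacets_add_collar (A : Finset V) :
    ∑ f ∈ C.innerFacets A, #(C.boundary f) + C.collar A = 2 * #(C.innerEdges A) := by
  have hsides := sum_card_filter_comm (C.innerEdges A) Finset.univ fun e f => f ∈ C.sides e
  simp only [Finset.filter_univ_mem, C.card_sides, Finset.sum_const, smul_eq_mul] at hsides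
  rw [sum_eq_inside_add_crossing_add_outside C.corners_nonempty A] at hsides
  have hin : ∀ f ∈ C.innerFacets A, #{e ∈ C.innerEdges A | f ∈ C.sides e} = #(C.boundary f) := by
    intro f hf
    congr 1
    ext e
    simp only [Finset.mem_filter, mem_innerEdges, mem_boundary, and_iff_right_iff_imp]
    exact fun he => (ends_subset_corners he).trans (mem_innerFacets.1 hf)
  have hout : ∀ f ∈ C.innerFacets Aᶜ, #{e ∈ C.innerEdges A | f ∈ C.sides e} = 0 := by
    intro f hf
    simp only [Finset.card_eq_zero, Finset.filter_eq_empty_iff, mem_innerEdges]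
    intro e he hef
    obtain ⟨v, hv⟩ := C.ends_nonempty e
    exact Finset.mem_compl.1 (mem_innerFacets.1 hf (ends_subset_corners hef hv)) (he hv)
  have hin' := Finset.sum_congr rfl hin
  have hout' := Finset.sum_eq_zero hout
  simp only [innerFacets, collar, crossingFacets] at *
  omega

lemma sum_card_cut_boundary (A : Finset V) :
    ∑ f ∈ C.crossingFacets A, #{e ∈ C.cut A | f ∈ C.sides e} = 2 * #(C.cut A) := by
  have hsides := sum_card_filter_comm (C.cut A) Finset.univ fun e f => f ∈ C.sides e
  simp only [Finset.filter_univ_mem, C.card_sides, Finset.sum_const, smul_eq_mul] at hsides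
  rw [mul_comm, hsides]
  refine Finset.sum_subset (Finset.subset_univ _) fun f _ hf => ?_
  rw [Finset.card_eq_zero, Finset.filter_eq_empty_iff]
  exact fun e he hef => hf (C.mem_crossingFacets_of_mem_cut he hef)

lemma sum_card_boundary_crossingFacets (A : Finset V) :
    ∑ f ∈ C.crossingFacets A, #(C.boundary f) =
      C.collar A + C.collar Aᶜ + 2 * #(C.cut A) := by
  rw [← sum_card_cut_boundary, collar, collar, crossingFacets_compl, ← Finset.sum_add_distrib,
    ← Finset.sum_add_distrib]
  refine Finset.sum_congr rfl fun f _ => ?_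
  have h := sum_eq_inside_add_crossing_add_outside C.ends_nonempty A (C.boundary f)
    fun _ => (1 : ℕ)
  simp only [Finset.sum_const, smul_eq_mul, mul_one, boundary, innerEdges, cut,
    Finset.filter_filter, and_comm] at h ⊢
  omega

/-! ### Connectedness -/

/-- The edges in `S` link up the vertices in `W`: whenever a vertex set cuts `W` into two nonempty
parts, some edge in `S` crosses its edge cut. -/
def Links (S : Finset E) (W : Finset V) : Prop :=
  ∀ A, (∃ v ∈ W, v ∈ A) → (∃ v ∈ W, v ∉ A) → ∃ e ∈ S, e ∈ C.cut A

variable {C} in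
lemma Links.eq_of_forall_ends {S : Finset E} {W : Finset V} (h : C.Links S W) {α : Type*}
    {x : V → α} (hx : ∀ e ∈ S, ∀ u ∈ C.ends e, ∀ w ∈ C.ends e, x u = x w) {u w : V} (hu : u ∈ W)
    (hw : w ∈ W) : x u = x w := by
  by_contra hne
  obtain ⟨e, heS, he⟩ := h {v | x v = x u} ⟨u, hu, by simp⟩ ⟨w, hw, by simpa using Ne.symm hne⟩
  obtain ⟨⟨v, hv, hvu⟩, v', hv', hvu'⟩ := mem_cut.1 he
  simp only [Finset.mem_filter, Finset.mem_univ, true_and] at hvu hvu'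
  exact hvu' (by rw [← hvu, hx e heS v hv v' hv'])

/-- The combinatorial sphere conditions: the graph is connected, so is the boundary of each facet,
and Euler's formula holds. -/
structure IsSpherical : Prop where
  links_univ : C.Links Finset.univ Finset.univ
  links_boundary : ∀ f, C.Links (C.boundary f) (C.corners f)
  euler : Fintype.card V + Fintype.card F = Fintype.card E + 2

/-- The height `h` does not decrease along the edge `e`, started at its end `v`. -/
def Ascends {α : Type*} [LinearOrder α] (h : V → α) (v : V) (e : E) : Prop :=
  ∀ w ∈ C.ends e, h v ≤ h w

/-- `v` is lowest among its neighbours along the edges in `S`. -/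
def IsLocalMin {α : Type*} [LinearOrder α] (h : V → α) (S : Finset E) (v : V) : Prop :=
  ∀ e ∈ S, v ∈ C.ends e → C.Ascends h v e

/-- The height `h` has at most one local minimum in the whole graph and at most one in the boundary
of each facet, as a linear function on a polytope does. -/
structure HasUniqueMinima {α : Type*} [LinearOrder α] (h : V → α) : Prop where
  eq_univ : ∀ v w, C.IsLocalMin h Finset.univ v → C.IsLocalMin h Finset.univ w → v = w
  eq_boundary : ∀ f, ∀ v ∈ C.corners f, ∀ w ∈ C.corners f,
    C.IsLocalMin h (C.boundary f) v → C.IsLocalMin h (C.boundary f) w → v = w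

variable {C} {α : Type*} [LinearOrder α] {h : V → α} {S : Finset E} {W : Finset V}

lemma exists_isLocalMin_of_disjoint_cut (h : V → α) (hS : ∀ e ∈ S, C.ends e ⊆ W) {B : Finset V}
    (hB : ∃ v ∈ W, v ∈ B) (hcut : ∀ e ∈ S, e ∉ C.cut B) :
    ∃ v ∈ W, v ∈ B ∧ C.IsLocalMin h S v := by
  obtain ⟨v, hvW, hvB⟩ := hB
  obtain ⟨m, hm, hmin⟩ := Finset.exists_min_image (W ∩ B) h ⟨v, by simp [hvW, hvB]⟩
  rw [Finset.mem_inter] at hm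
  refine ⟨m, hm.1, hm.2, fun e he hme w hw => hmin w (Finset.mem_inter.2 ⟨hS e he hw, ?_⟩)⟩
  by_contra hwB
  exact hcut e he (mem_cut.2 ⟨⟨m, hme, hm.2⟩, w, hw, hwB⟩)

lemma links_of_unique_isLocalMin (hS : ∀ e ∈ S, C.ends e ⊆ W)
    (huniq : ∀ v ∈ W, ∀ w ∈ W, C.IsLocalMin h S v → C.IsLocalMin h S w → v = w) :
    C.Links S W := by
  intro A hA hA'
  by_contra! hcut
  obtain ⟨v, hvW, hvA, hv⟩ := exists_isLocalMin_of_disjoint_cut h hS hA hcut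
  obtain ⟨w, hwW, hwA, hw⟩ := exists_isLocalMin_of_disjoint_cut h hS (B := Aᶜ) (by simpa using hA')
    (by simpa only [cut_compl] using hcut)
  exact Finset.mem_compl.1 hwA (huniq v hvW w hwW hv hw ▸ hvA)

lemma card_isLocalMin_eq_one (hS : ∀ e ∈ S, C.ends e ⊆ W) (hW : W.Nonempty)
    (huniq : ∀ v ∈ W, ∀ w ∈ W, C.IsLocalMin h S v → C.IsLocalMin h S w → v = w) :
    #{v | v ∈ W ∧ C.IsLocalMin h S v} = 1 := by
  obtain ⟨m, hmW, -, hm⟩ := exists_isLocalMin_of_disjoint_cut h hS (B := Finset.univ)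
    (hW.imp fun v hv => ⟨hv, Finset.mem_univ v⟩) (by simp [cut])
  refine Finset.card_eq_one.2 ⟨m, Finset.eq_singleton_iff_unique_mem.2 ⟨by simp [hmW, hm], ?_⟩⟩
  intro w hw
  simp only [Finset.mem_filter, Finset.mem_univ, true_and] at hw
  exact huniq w hw.1 m hmW hw.2 hm

lemma HasUniqueMinima.links_univ (hh : C.HasUniqueMinima h) : C.Links Finset.univ Finset.univ :=
  links_of_unique_isLocalMin (fun _ _ => Finset.subset_univ _) fun v _ w _ => hh.eq_univ v w

lemma ends_subset_corners_of_mem_boundary : ∀ e ∈ C.boundary f, C.ends e ⊆ C.corners f :=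
  fun _ he => ends_subset_corners (mem_boundary.1 he)

lemma HasUniqueMinima.links_boundary (hh : C.HasUniqueMinima h) (f : F) :
    C.Links (C.boundary f) (C.corners f) :=
  links_of_unique_isLocalMin ends_subset_corners_of_mem_boundary (hh.eq_boundary f)

lemma HasUniqueMinima.card_isLocalMin_univ [Nonempty V] (hh : C.HasUniqueMinima h) :
    #{v | C.IsLocalMin h Finset.univ v} = 1 := by
  simpa using card_isLocalMin_eq_one (fun _ _ => Finset.subset_univ _) Finset.univ_nonempty
    fun v _ w _ => hh.eq_univ v w

lemma HasUniqueMinima.sum_card_isLocalMin_boundary (hh : C.HasUniqueMinima h) :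
    ∑ v, #{f | v ∈ C.corners f ∧ C.IsLocalMin h (C.boundary f) v} = Fintype.card F := by
  rw [sum_card_filter_comm, Fintype.card_eq_sum_ones]
  exact Finset.sum_congr rfl fun f _ => card_isLocalMin_eq_one
    ends_subset_corners_of_mem_boundary (C.corners_nonempty f) (hh.eq_boundary f)

variable (C) in
lemma exists_star_eq (v : V) : ∃ a b c, a ≠ b ∧ a ≠ c ∧ b ≠ c ∧
    ∀ e, v ∈ C.ends e ↔ e = a ∨ e = b ∨ e = c := by
  obtain ⟨a, b, c, hab, hac, hbc, h⟩ := Finset.card_eq_three.1 (C.card_star v)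
  exact ⟨a, b, c, hab, hac, hbc, fun e => by simpa using congrArg (e ∈ ·) h⟩

variable (C) in
lemma exists_sides_eq (e : E) : ∃ f g, f ≠ g ∧ ∀ x, x ∈ C.sides e ↔ x = f ∨ x = g := by
  obtain ⟨f, g, hfg, h⟩ := Finset.card_eq_two.1 (C.card_sides e)
  exact ⟨f, g, hfg, fun x => by simp [h]⟩

lemma exists_corner_edges_eq (hv : v ∈ C.corners f) :
    ∃ a b, a ≠ b ∧ ∀ e, v ∈ C.ends e ∧ f ∈ C.sides e ↔ e = a ∨ e = b := by
  obtain ⟨a, b, hab, h⟩ := Finset.card_eq_two.1 (C.card_corner v f (mem_corners.1 hv))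
  exact ⟨a, b, hab, fun e => by simpa using congrArg (e ∈ ·) h⟩

lemma mem_exactly_two_sides {a b c : E} (hab : a ≠ b) (hac : a ≠ c) (hbc : b ≠ c)
    (hstar : ∀ e, v ∈ C.ends e ↔ e = a ∨ e = b ∨ e = c)
    (hf : f ∈ C.sides a ∨ f ∈ C.sides b ∨ f ∈ C.sides c) :
    ¬ (f ∈ C.sides a ∧ f ∈ C.sides b ∧ f ∈ C.sides c) ∧
      (f ∈ C.sides a ∧ f ∈ C.sides b ∨ f ∈ C.sides a ∧ f ∈ C.sides c ∨
        f ∈ C.sides b ∧ f ∈ C.sides c) := by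
  have hvf : v ∈ C.corners f := by
    rw [mem_corners]
    rcases hf with hf | hf | hf
    exacts [⟨a, by simp [hstar], hf⟩, ⟨b, by simp [hstar], hf⟩, ⟨c, by simp [hstar], hf⟩]
  obtain ⟨s, t, hst, hedges⟩ := exists_corner_edges_eq hvf
  simp only [hstar] at hedges
  have := hedges a; have := hedges b; have := hedges c; have := hedges s; have := hedges t
  grind

variable (C) in
lemma exists_star_eq_and_sides_eq (v : V) : ∃ a b c p q r, p ≠ q ∧ p ≠ r ∧ q ≠ r ∧
    (∀ e, v ∈ C.ends e ↔ e = a ∨ e = b ∨ e = c) ∧ (∀ x, x ∈ C.sides a ↔ x = q ∨ x = r) ∧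
    (∀ x, x ∈ C.sides b ↔ x = p ∨ x = r) ∧ (∀ x, x ∈ C.sides c ↔ x = p ∨ x = q) := by
  obtain ⟨a, b, c, hab, hac, hbc, hstar⟩ := C.exists_star_eq v
  have hcorner := fun x => mem_exactly_two_sides (f := x) hab hac hbc hstar
  obtain ⟨a₁, a₂, ha, hsa⟩ := C.exists_sides_eq a
  obtain ⟨b₁, b₂, hb, hsb⟩ := C.exists_sides_eq b
  obtain ⟨c₁, c₂, _, hsc⟩ := C.exists_sides_eq c
  simp only [hsa, hsb, hsc] at hcorner
  have := hcorner a₁; have := hcorner a₂; have := hcorner b₁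
  have := hcorner b₂; have := hcorner c₁; have := hcorner c₂
  obtain ⟨p, q, r, hpq, hpr, hqr, ha', hb', hc'⟩ : ∃ p q r, p ≠ q ∧ p ≠ r ∧ q ≠ r ∧
      (a₁ = q ∧ a₂ = r ∨ a₁ = r ∧ a₂ = q) ∧ (b₁ = p ∧ b₂ = r ∨ b₁ = r ∧ b₂ = p) ∧
      (c₁ = p ∧ c₂ = q ∨ c₁ = q ∧ c₂ = p) := by
    clear hsa hsb hsc hstar hcorner
    by_cases h₁ : a₁ = b₁
    · refine ⟨b₂, a₂, a₁, ?_⟩; grind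
    by_cases h₂ : a₁ = b₂
    · refine ⟨b₁, a₂, a₁, ?_⟩; grind
    by_cases h₃ : a₂ = b₁
    · refine ⟨b₂, a₁, a₂, ?_⟩; grind
    · refine ⟨b₁, a₁, a₂, ?_⟩; grind
  refine ⟨a, b, c, p, q, r, hpq, hpr, hqr, hstar, fun x => ?_, fun x => ?_, fun x => ?_⟩
  · rw [hsa]; grind
  · rw [hsb]; grind
  · rw [hsc]; grind

variable (C) in
lemma exists_card_eq_of_forall_mem_iff (v : V) : ∃ a b c,
    (∀ e, v ∈ C.ends e ↔ e = a ∨ e = b ∨ e = c) ∧ ∀ (Q : E → Prop) (s : Finset F),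
      (∀ f, f ∈ s ↔ v ∈ C.corners f ∧ ∀ e ∈ C.boundary f, v ∈ C.ends e → Q e) →
      #s = (if Q b ∧ Q c then 1 else 0) + (if Q a ∧ Q c then 1 else 0) +
        (if Q a ∧ Q b then 1 else 0) := by
  obtain ⟨a, b, c, p, q, r, hpq, hpr, hqr, hstar, ha, hb, hc⟩ := C.exists_star_eq_and_sides_eq v
  refine ⟨a, b, c, hstar, fun Q s hs => ?_⟩
  have hfacets : s = {f ∈ ({p, q, r} : Finset F) |
      (f = p → Q b ∧ Q c) ∧ (f = q → Q a ∧ Q c) ∧ (f = r → Q a ∧ Q b)} := by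
    ext f
    simp only [hs, mem_corners, mem_boundary, hstar, Finset.mem_filter, Finset.mem_insert,
      Finset.mem_singleton, or_and_right, exists_or, exists_eq_left, ha, hb, hc]
    grind
  rw [hfacets]
  by_cases hQa : Q a <;> by_cases hQb : Q b <;> by_cases hQc : Q c <;>
    simp [hQa, hQb, hQc, Finset.filter_insert, Finset.filter_singleton, hpq, hpr, hqr, hpq.symm,
      hpr.symm, hqr.symm]

lemma ascends_toDual_iff (hinj : Function.Injective h) (hv : v ∈ C.ends e) :
    C.Ascends (OrderDual.toDual ∘ h) v e ↔ ¬ C.Ascends h v e := by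
  obtain ⟨u, w, huw, he⟩ := Finset.card_eq_two.1 (C.card_ends e)
  have hne := hinj.ne huw
  simp only [Ascends, he, Finset.mem_insert, Finset.mem_singleton, forall_eq_or_imp, forall_eq,
    Function.comp_apply, OrderDual.toDual_le_toDual] at hv ⊢
  grind

/-- Among the three facets at a vertex with `k` ascending edges, `k.choose 2` are locally lowest and
`(3 - k).choose 2` locally highest there. -/
lemma card_isLocalMin_boundary_add_card_isLocalMax_boundary (hinj : Function.Injective h) (v : V) :
    #{f | v ∈ C.corners f ∧ C.IsLocalMin h (C.boundary f) v} +
      #{f | v ∈ C.corners f ∧ C.IsLocalMin (OrderDual.toDual ∘ h) (C.boundary f) v} =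
    1 + 2 * (if C.IsLocalMin h Finset.univ v then 1 else 0) +
      2 * (if C.IsLocalMin (OrderDual.toDual ∘ h) Finset.univ v then 1 else 0) := by
  obtain ⟨a, b, c, hstar, hcard⟩ := C.exists_card_eq_of_forall_mem_iff v
  have hlowest := hcard (C.Ascends h v)
    {f | v ∈ C.corners f ∧ C.IsLocalMin h (C.boundary f) v} fun f => Finset.mem_filter_univ f
  have hhighest := hcard (C.Ascends (OrderDual.toDual ∘ h) v)
    {f | v ∈ C.corners f ∧ C.IsLocalMin (OrderDual.toDual ∘ h) (C.boundary f) v}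
    fun f => Finset.mem_filter_univ f
  rw [hlowest, hhighest]
  simp only [IsLocalMin, Finset.mem_univ, true_implies, hstar, forall_eq_or_imp, forall_eq,
    ascends_toDual_iff hinj ((hstar a).2 (by simp)),
    ascends_toDual_iff hinj ((hstar b).2 (by simp)),
    ascends_toDual_iff hinj ((hstar c).2 (by simp))]
  by_cases ha : C.Ascends h v a <;> by_cases hb : C.Ascends h v b <;>
    by_cases hc : C.Ascends h v c <;> simp [ha, hb, hc]

theorem isSpherical_of_hasUniqueMinima [Nonempty V] (hinj : Function.Injective h)
    (hmin : C.HasUniqueMinima h) (hmax : C.HasUniqueMinima (OrderDual.toDual ∘ h)) :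
    C.IsSpherical where
  links_univ := hmin.links_univ
  links_boundary := hmin.links_boundary
  euler := by
    have hlocal := Finset.sum_congr rfl fun v (_ : v ∈ Finset.univ) =>
      card_isLocalMin_boundary_add_card_isLocalMax_boundary (C := C) hinj v
    simp only [Finset.sum_add_distrib, ← Finset.mul_sum, ← Finset.card_filter,
      hmin.sum_card_isLocalMin_boundary, hmax.sum_card_isLocalMin_boundary,
      hmin.card_isLocalMin_univ, hmax.card_isLocalMin_univ, Finset.sum_const, Finset.card_univ,
      smul_eq_mul] at hlocal
    have hedges := C.two_mul_card_innerEdges_add_card_cut Finset.univ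
    simp only [innerEdges, cut, Finset.subset_univ, Finset.filter_true, not_true, false_and,
      Finset.filter_false, Finset.card_empty, Finset.card_univ] at hedges
    omega

lemma exists_common_edge {g : F} (hf : v ∈ C.corners f) (hg : v ∈ C.corners g) :
    ∃ e, v ∈ C.ends e ∧ f ∈ C.sides e ∧ g ∈ C.sides e := by
  obtain ⟨a, b, c, p, q, r, -, -, -, hstar, ha, hb, hc⟩ := C.exists_star_eq_and_sides_eq v
  simp only [mem_corners, hstar, or_and_right, exists_or, exists_eq_left, ha, hb, hc] at hf hg ⊢
  grind

lemma exists_common_side {e' : E} (he : v ∈ C.ends e) (he' : v ∈ C.ends e') :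
    ∃ f, f ∈ C.sides e ∧ f ∈ C.sides e' := by
  obtain ⟨a, b, c, p, q, r, -, -, -, hstar, ha, hb, hc⟩ := C.exists_star_eq_and_sides_eq v
  rw [hstar] at he he'
  rcases he with rfl | rfl | rfl <;> rcases he' with rfl | rfl | rfl <;>
    simp [ha, hb, hc, or_and_right, exists_or]

lemma IsSpherical.eq_of_forall_sides (hC : C.IsSpherical) {β : Type*} {y : F → β}
    (hy : ∀ e, ∀ f ∈ C.sides e, ∀ g ∈ C.sides e, y f = y g) (f g : F) : y f = y g := by
  have hcorner : ∀ {v f g}, v ∈ C.corners f → v ∈ C.corners g → y f = y g := fun hf hg =>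
    have ⟨e, _, hfe, hge⟩ := exists_common_edge hf hg
    hy e _ hfe _ hge
  obtain ⟨u, hu⟩ := C.corners_nonempty f
  obtain ⟨w, hw⟩ := C.corners_nonempty g
  have hconst := hC.links_univ.eq_of_forall_ends (x := fun v => ∃ f', v ∈ C.corners f' ∧ y f' = y f)
    (fun e _ u hu w hw => ?_) (Finset.mem_univ u) (Finset.mem_univ w)
  · obtain ⟨f', hf', hy'⟩ := hconst.mp ⟨f, hu, rfl⟩
    rw [← hy', hcorner hf' hw]
  · obtain ⟨f₀, hf₀⟩ := C.sides_nonempty e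
    have hends := fun v (hv : v ∈ C.ends e) => ends_subset_corners hf₀ hv
    have hiff : ∀ v ∈ C.ends e, (∃ f', v ∈ C.corners f' ∧ y f' = y f) ↔ y f₀ = y f :=
      fun v hv => ⟨fun ⟨f', hf', h⟩ => (hcorner (hends v hv) hf').trans h,
        fun h => ⟨f₀, hends v hv, h⟩⟩
    exact propext ((hiff u hu).trans (hiff w hw).symm)

/-! ### Incidence matrices modulo 2 -/

/-- The incidence matrix over `ZMod 2` of a family of finite sets. -/
def incidence {α β : Type*} (S : β → Finset α) : Matrix β α (ZMod 2) :=
  Matrix.of fun b a => if a ∈ S b then 1 else 0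

section Incidence

variable {α β γ : Type*}

lemma incidence_mulVec [Fintype α] (S : β → Finset α) (x : α → ZMod 2) (b : β) :
    (incidence S).mulVec x b = ∑ a ∈ S b, x a := by
  simp [incidence, Matrix.mulVec, dotProduct]

lemma transpose_incidence_mulVec_indicator [Fintype β] (S : β → Finset α) (T : Finset β) (a : α) :
    (incidence S).transpose.mulVec (fun b => if b ∈ T then 1 else 0) a = #{b ∈ T | a ∈ S b} := by
  simp [incidence, Matrix.mulVec, dotProduct]

lemma transpose_incidence_mul_incidence_apply [Fintype β] (S : β → Finset α) (T : β → Finset γ)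
    (a : α) (c : γ) :
    ((incidence S).transpose * incidence T) a c = #{b | a ∈ S b ∧ c ∈ T b} := by
  simp [incidence, Matrix.mul_apply, ← ite_and, and_comm]

lemma apply_eq_of_sum_eq_zero {s : Finset α} (hs : #s = 2) {x : α → ZMod 2}
    (hx : ∑ a ∈ s, x a = 0) : ∀ a ∈ s, ∀ b ∈ s, x a = x b := by
  obtain ⟨a, b, hab, rfl⟩ := Finset.card_eq_two.1 hs
  rw [Finset.sum_pair hab, CharTwo.add_eq_zero] at hx
  simp [hx]

lemma incidence_subtype_mulVec {p : α → Prop} [DecidablePred p] [Fintype (Subtype p)]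
    (S : β → Finset α) (x : Subtype p → ZMod 2) (b : β) :
    (incidence fun b => (S b).subtype p).mulVec x b =
      ∑ a ∈ S b, Function.extend Subtype.val x (fun _ => 0) a := by
  rw [incidence_mulVec, ← Finset.sum_filter_of_ne (p := p), ← Finset.sum_subtype_eq_sum_filter]
  · exact Finset.sum_congr rfl fun a _ => (Subtype.val_injective.extend_apply x _ a).symm
  · intro a _ ha
    by_contra hpa
    exact ha (Function.extend_apply' x _ a fun ⟨b, hb⟩ => hpa (hb ▸ b.2))

lemma card_le_rank_add_one {K : Type*} [Field K] [Fintype α] (M : Matrix β α K)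
    (hM : ∀ x, M.mulVec x = 0 → ∀ i j, x i = x j) : Fintype.card α ≤ M.rank + 1 := by
  have hker : LinearMap.ker M.mulVecLin ≤ Submodule.span K {1} := fun x hx => by
    obtain ⟨c, hc⟩ : ∃ c, ∀ i, x i = c := by
      rcases isEmpty_or_nonempty α with _ | ⟨⟨i⟩⟩
      exacts [⟨0, isEmptyElim⟩, ⟨x i, fun j => hM x hx j i⟩]
    exact Submodule.mem_span_singleton.2 ⟨c, funext fun i => by simp [hc]⟩
  have hle := (Submodule.finrank_mono hker).trans (finrank_span_le_card _)
  have hrank := LinearMap.finrank_range_add_finrank_ker M.mulVecLin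
  rw [Module.finrank_fintype_fun_eq_card] at hrank
  simp only [Set.toFinset_singleton, Finset.card_singleton] at hle
  rw [Matrix.rank]
  omega

end Incidence

lemma natCast_card_corner_eq_zero (C : CubicMap V E F) (v : V) (f : F) :
    (#{e | v ∈ C.ends e ∧ f ∈ C.sides e} : ZMod 2) = 0 := by
  by_cases hvf : ∃ e, v ∈ C.ends e ∧ f ∈ C.sides e
  · rw [C.card_corner v f hvf]; rfl
  · rw [Finset.filter_eq_empty_iff.2 fun e _ he => hvf ⟨e, he⟩]; rfl

lemma card_le_rank_incidence_ends_add_one (hA : C.Links (C.innerEdges A) A) :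
    #A ≤ (incidence fun e : C.innerEdges A => (C.ends e).subtype (· ∈ A)).rank + 1 := by
  rw [← Fintype.card_coe A]
  refine card_le_rank_add_one _ fun x hx i j => ?_
  set y : V → ZMod 2 := Function.extend Subtype.val x fun _ => 0 with hy
  have hconst : ∀ e ∈ C.innerEdges A, ∀ u ∈ C.ends e, ∀ w ∈ C.ends e,
      y u = y w := fun e he =>
    apply_eq_of_sum_eq_zero (C.card_ends e) <|
      (incidence_subtype_mulVec (fun e : C.innerEdges A => C.ends e) x ⟨e, he⟩).symm.trans
        (congrFun hx ⟨e, he⟩)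
  have hij := hA.eq_of_forall_ends hconst i.2 j.2
  rwa [hy, Subtype.val_injective.extend_apply, Subtype.val_injective.extend_apply] at hij

lemma IsSpherical.rank_incidence_sides (hC : C.IsSpherical) (hA : Aᶜ.Nonempty) :
    (incidence fun e : C.innerEdges A => (C.sides e).subtype (· ∈ C.innerFacets A)).rank =
      #(C.innerFacets A) := by
  rw [← Fintype.card_coe (C.innerFacets A), ← Module.finrank_fintype_fun_eq_card (R := ZMod 2),
    Matrix.rank]
  refine LinearMap.finrank_range_of_inj (LinearMap.ker_eq_bot.1 (LinearMap.ker_eq_bot'.2 ?_))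
  intro x hx
  rw [Matrix.mulVecLin_apply] at hx
  set y : F → ZMod 2 := Function.extend Subtype.val x fun _ => 0 with hy
  have hout : ∀ f ∉ C.innerFacets A, y f = 0 := fun f hf =>
    Function.extend_apply' x _ f fun ⟨g, hg⟩ => hf (hg ▸ g.2)
  have hconst : ∀ e, ∀ f ∈ C.sides e, ∀ g ∈ C.sides e,
      y f = y g := fun e => by
    by_cases he : e ∈ C.innerEdges A
    · exact apply_eq_of_sum_eq_zero (C.card_sides e) <|
        (incidence_subtype_mulVec (fun e : C.innerEdges A => C.sides e) x ⟨e, he⟩).symm.trans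
          (congrFun hx ⟨e, he⟩)
    · have hzero : ∀ f ∈ C.sides e, y f = 0 := fun f hf => hout f fun hfA =>
        he (mem_innerEdges.2 ((ends_subset_corners hf).trans (mem_innerFacets.1 hfA)))
      intro f hf g hg
      rw [hzero f hf, hzero g hg]
  obtain ⟨w, hw⟩ := hA
  obtain ⟨e, he⟩ := C.exists_mem_ends w
  obtain ⟨g, hg⟩ := C.sides_nonempty e
  have hgA : g ∉ C.innerFacets A := fun hgA =>
    Finset.mem_compl.1 hw (mem_innerFacets.1 hgA (ends_subset_corners hg he))
  ext f
  rw [← Subtype.val_injective.extend_apply x (fun _ => 0) f, ← hy,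
    hC.eq_of_forall_sides hconst f g, hout g hgA]; rfl

lemma IsSpherical.card_add_card_innerFacets_le (hC : C.IsSpherical)
    (hA : C.Links (C.innerEdges A) A) (hAc : Aᶜ.Nonempty) :
    #A + #(C.innerFacets A) ≤ #(C.innerEdges A) + 1 := by
  have hzero : (incidence fun e : C.innerEdges A => (C.ends e).subtype (· ∈ A)).transpose *
      (incidence fun e : C.innerEdges A => (C.sides e).subtype (· ∈ C.innerFacets A)) = 0 := by
    ext v f
    have hcard : #{e : C.innerEdges A | ↑v ∈ C.ends e ∧ ↑f ∈ C.sides e} =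
        #{e | ↑v ∈ C.ends e ∧ ↑f ∈ C.sides e} := by
      refine Finset.card_bij (fun e _ => e) (by simp) (fun _ _ _ _ => Subtype.ext) fun e he => ?_
      have hmem := (Finset.mem_filter_univ e).1 he
      exact ⟨⟨e, mem_innerEdges.2 <| (ends_subset_corners hmem.2).trans (mem_innerFacets.1 f.2)⟩,
        by simpa using hmem, rfl⟩
    simp only [transpose_incidence_mul_incidence_apply, Finset.mem_subtype, hcard,
      natCast_card_corner_eq_zero, Matrix.zero_apply]
  have hrank := Matrix.rank_add_rank_le_card_of_mul_eq_zero hzero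
  rw [Matrix.rank_transpose, hC.rank_incidence_sides hAc, Fintype.card_coe] at hrank
  have hends := card_le_rank_incidence_ends_add_one hA
  omega

/-- By Euler's formula the cut space is the orthogonal complement of the facet boundaries. -/
lemma IsSpherical.range_incidence_ends (hC : C.IsSpherical) :
    LinearMap.range (incidence C.ends).mulVecLin =
      LinearMap.ker (incidence C.sides).transpose.mulVecLin := by
  have hle : LinearMap.range (incidence C.ends).mulVecLin ≤
      LinearMap.ker (incidence C.sides).transpose.mulVecLin := by
    rw [LinearMap.range_le_ker_iff, ← Matrix.mulVecLin_mul, ← Matrix.mulVecLin_zero]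
    congr 1
    ext f v
    simp only [transpose_incidence_mul_incidence_apply, and_comm (a := f ∈ _),
      natCast_card_corner_eq_zero, Matrix.zero_apply]
  have hends : Fintype.card V ≤ (incidence C.ends).rank + 1 :=
    card_le_rank_add_one _ fun x hx u w => hC.links_univ.eq_of_forall_ends
      (fun e _ => apply_eq_of_sum_eq_zero (C.card_ends e)
        (incidence_mulVec C.ends x e ▸ congrFun hx e))
      (Finset.mem_univ u) (Finset.mem_univ w)
  have hsides : Fintype.card F ≤ (incidence C.sides).transpose.rank + 1 := by
    rw [Matrix.rank_transpose]
    exact card_le_rank_add_one _ fun x hx => hC.eq_of_forall_sides fun e =>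
      apply_eq_of_sum_eq_zero (C.card_sides e) (incidence_mulVec C.sides x e ▸ congrFun hx e)
  have hrank := LinearMap.finrank_range_add_finrank_ker (incidence C.sides).transpose.mulVecLin
  rw [Module.finrank_fintype_fun_eq_card] at hrank
  rw [Matrix.rank] at hends hsides
  have heuler := hC.euler
  exact Submodule.eq_of_le_of_finrank_le hle (by omega)

lemma IsSpherical.exists_cut_eq (hC : C.IsSpherical) {T : Finset E}
    (hT : ∀ f, Even #{e ∈ T | f ∈ C.sides e}) : ∃ A, C.cut A = T := by
  have hmem : (fun e => if e ∈ T then 1 else 0) ∈ LinearMap.range (incidence C.ends).mulVecLin := by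
    rw [hC.range_incidence_ends, LinearMap.mem_ker, Matrix.mulVecLin_apply]
    ext f
    rw [transpose_incidence_mulVec_indicator, (ZMod.natCast_eq_zero_iff_even).2 (hT f)]; rfl
  obtain ⟨x, hx⟩ := hmem
  refine ⟨({v | x v = 1} : Finset V), ?_⟩
  ext e
  have hxe := congrFun hx e
  obtain ⟨u, w, huw, he⟩ := Finset.card_eq_two.1 (C.card_ends e)
  rw [Matrix.mulVecLin_apply, incidence_mulVec, he, Finset.sum_pair huw] at hxe
  simp only [mem_cut, he, Finset.mem_insert, Finset.mem_singleton, exists_eq_or_imp,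
    exists_eq_left, Finset.mem_filter_univ]
  generalize x u = y at *
  generalize x w = z at *
  by_cases heT : e ∈ T <;> simp only [heT] at hxe ⊢ <;> revert hxe <;> revert y z <;> decide

/-! ### Minimal cuts -/

lemma mem_innerEdges_of_notMem_cut (hv : v ∈ A) (hve : v ∈ C.ends e) (he : e ∉ C.cut A) :
    e ∈ C.innerEdges A := by
  refine mem_innerEdges.2 fun w hw => ?_
  by_contra hwA
  exact he (mem_cut.2 ⟨⟨v, hve, hv⟩, w, hw, hwA⟩)

lemma IsSpherical.card_cut_pos (hC : C.IsSpherical) (hA : A.Nonempty) (hA' : Aᶜ.Nonempty) :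
    0 < #(C.cut A) := by
  obtain ⟨e, -, he⟩ := hC.links_univ A (hA.imp fun v hv => ⟨Finset.mem_univ v, hv⟩)
    (hA'.imp fun v hv => ⟨Finset.mem_univ v, Finset.mem_compl.1 hv⟩)
  exact Finset.card_pos.2 ⟨e, he⟩

lemma even_card_boundary_inter_cut (f : F) (A : Finset V) :
    Even #{e ∈ C.cut A | f ∈ C.sides e} := by
  have hsum := C.sum_card_star_eq A (C.boundary f)
  have hstar : ∀ v ∈ A, 2 ∣ #{e ∈ C.boundary f | v ∈ C.ends e} := fun v _ => by
    rw [boundary, Finset.filter_filter, ← even_iff_two_dvd, ← ZMod.natCast_eq_zero_iff_even]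
    simpa only [and_comm] using C.natCast_card_corner_eq_zero v f
  have hcut : ({e ∈ C.boundary f | e ∈ C.cut A} : Finset E) = {e ∈ C.cut A | f ∈ C.sides e} := by
    ext e; simp [mem_boundary, and_comm]
  rw [hcut] at hsum
  exact even_iff_two_dvd.2
    ((Nat.dvd_add_right (dvd_mul_right 2 _)).1 (hsum ▸ Finset.dvd_sum hstar))

lemma IsSpherical.two_le_card_boundary_inter_cut (hC : C.IsSpherical)
    (hf : f ∈ C.crossingFacets A) : 2 ≤ #{e ∈ C.cut A | f ∈ C.sides e} := by
  obtain ⟨hfA, hfA'⟩ := mem_crossingFacets.1 hf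
  obtain ⟨e, hef, he⟩ := hC.links_boundary f A hfA hfA'
  have hpos : 0 < #{e ∈ C.cut A | f ∈ C.sides e} :=
    Finset.card_pos.2 ⟨e, Finset.mem_filter.2 ⟨he, mem_boundary.1 hef⟩⟩
  obtain ⟨k, hk⟩ := even_card_boundary_inter_cut (C := C) f A
  omega

lemma IsSpherical.card_crossingFacets_le (hC : C.IsSpherical) (A : Finset V) :
    #(C.crossingFacets A) ≤ #(C.cut A) := by
  have hle := Finset.card_nsmul_le_sum (C.crossingFacets A) _ 2
    fun _ hf => hC.two_le_card_boundary_inter_cut hf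
  rw [C.sum_card_cut_boundary, smul_eq_mul] at hle
  omega

lemma card_cut_add_card_cut_sdiff_le {S : Finset V} (hSA : S ⊆ A)
    (hS : ∀ e ∈ C.innerEdges A, e ∉ C.cut S) : #(C.cut S) + #(C.cut (A \ S)) ≤ #(C.cut A) := by
  have hdisj : Disjoint (C.cut S) (C.cut (A \ S)) ∧ C.cut S ∪ C.cut (A \ S) ⊆ C.cut A := by
    rw [Finset.disjoint_left, Finset.union_subset_iff]
    refine ⟨fun e => ?_, fun e => ?_, fun e => ?_⟩ <;>
    · have he := hS e
      obtain ⟨u, w, -, hends⟩ := Finset.card_eq_two.1 (C.card_ends e)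
      have hu := @hSA u
      have hw := @hSA w
      simp only [mem_innerEdges, mem_cut, hends, Finset.insert_subset_iff,
        Finset.singleton_subset_iff, Finset.mem_insert, Finset.mem_singleton, exists_eq_or_imp,
        exists_eq_left, Finset.mem_sdiff] at he ⊢
      tauto
  rw [← Finset.card_union_of_disjoint hdisj.1]
  exact Finset.card_le_card hdisj.2

lemma card_cut_erase_add_le (hv : v ∈ A) :
    #(C.cut (A.erase v)) + 2 * #{e ∈ C.cut A | v ∈ C.ends e} ≤ #(C.cut A) + 3 := by
  have hsub : C.cut (A.erase v) ⊆
      {e ∈ C.cut A | v ∉ C.ends e} ∪ {e ∈ ({e | v ∈ C.ends e} : Finset E) | e ∉ C.cut A} := by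
    intro e
    obtain ⟨u, w, _, he⟩ := Finset.card_eq_two.1 (C.card_ends e)
    simp only [Finset.mem_union, Finset.mem_filter, Finset.mem_univ, true_and, mem_cut, he,
      Finset.mem_insert, Finset.mem_singleton, exists_eq_or_imp, exists_eq_left, Finset.mem_erase]
    grind
  have hle := (Finset.card_le_card hsub).trans (Finset.card_union_le _ _)
  have hcut := Finset.card_filter_add_card_filter_not (s := C.cut A) fun e => v ∈ C.ends e
  have hstar := Finset.card_filter_add_card_filter_not (s := ({e | v ∈ C.ends e} : Finset E))
    fun e => e ∈ C.cut A
  have hcomm : {e ∈ ({e | v ∈ C.ends e} : Finset E) | e ∈ C.cut A} =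
      {e ∈ C.cut A | v ∈ C.ends e} := by
    ext e; simp [and_comm]
  rw [C.card_star, hcomm] at hstar
  omega

variable (C) in
/-- A nontrivial cut: both sides have at least as many vertices as there are edges across. -/
structure IsNontrivialCut (A : Finset V) : Prop where
  nonempty : A.Nonempty
  compl_nonempty : Aᶜ.Nonempty
  card_cut_le : #(C.cut A) ≤ #A
  card_cut_le_compl : #(C.cut A) ≤ #Aᶜ

variable (C) in
/-- A nontrivial cut with as few edges as possible. -/
structure IsMinCut (A : Finset V) : Prop extends C.IsNontrivialCut A where
  card_cut_min : ∀ B, C.IsNontrivialCut B → #(C.cut A) ≤ #(C.cut B)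

lemma IsNontrivialCut.compl (hA : C.IsNontrivialCut A) : C.IsNontrivialCut Aᶜ :=
  ⟨hA.compl_nonempty, by simpa using hA.nonempty, by simpa [cut_compl] using hA.card_cut_le_compl,
    by simpa [cut_compl] using hA.card_cut_le⟩

lemma IsMinCut.compl (hA : C.IsMinCut A) : C.IsMinCut Aᶜ :=
  ⟨hA.toIsNontrivialCut.compl, by simpa only [cut_compl] using hA.card_cut_min⟩

lemma IsNontrivialCut.exists_isMinCut (hA : C.IsNontrivialCut A) :
    ∃ B, C.IsMinCut B ∧ #(C.cut B) ≤ #(C.cut A) := by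
  obtain ⟨B, hB, hmin⟩ := Finset.exists_min_image {A | C.IsNontrivialCut A} (fun A => #(C.cut A))
    ⟨A, by simpa using hA⟩
  simp only [Finset.mem_filter_univ] at hB hmin
  exact ⟨B, ⟨hB, hmin⟩, hmin A hA⟩

lemma IsMinCut.le_card_cut_of_subset {B : Finset V} (hA : C.IsMinCut A) (hBA : B ⊆ A)
    (hB : B.Nonempty) (hcut : #(C.cut B) ≤ #B) : #(C.cut A) ≤ #(C.cut B) := by
  by_contra! hlt
  have hcompl := Finset.compl_subset_compl.2 hBA
  have hcard := Finset.card_le_card hcompl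
  have hle := hA.card_cut_le_compl
  exact hlt.not_ge (hA.card_cut_min B ⟨hB, hA.compl_nonempty.mono hcompl, hcut, by omega⟩)

lemma IsMinCut.links (hC : C.IsSpherical) (hA : C.IsMinCut A) : C.Links (C.innerEdges A) A := by
  rintro S ⟨v, hvA, hvS⟩ ⟨w, hwA, hwS⟩
  by_contra! hcross
  have hcut : ∀ e ∈ C.innerEdges A, e ∉ C.cut (A ∩ S) := by
    intro e he hmem
    obtain ⟨⟨x, hx, hxS⟩, y, hy, hyS⟩ := mem_cut.1 hmem
    have hyA := mem_innerEdges.1 he hy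
    rw [Finset.mem_inter] at hxS hyS
    exact hcross e he (mem_cut.2 ⟨⟨x, hx, hxS.2⟩, y, hy, fun hy' => hyS ⟨hyA, hy'⟩⟩)
  have hsub : A ∩ S ⊆ A := Finset.inter_subset_left
  have hne : (A ∩ S).Nonempty := ⟨v, by simp [hvA, hvS]⟩
  have hne' : (A \ (A ∩ S)).Nonempty := ⟨w, by simp [hwA, hwS]⟩
  have hadd := card_cut_add_card_cut_sdiff_le hsub hcut
  have hcard := Finset.card_sdiff_add_card_eq_card hsub
  have hpos := hC.card_cut_pos hne (hA.compl_nonempty.mono (Finset.compl_subset_compl.2 hsub))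
  have hpos' := hC.card_cut_pos hne'
    (hA.compl_nonempty.mono (Finset.compl_subset_compl.2 Finset.sdiff_subset))
  have hmin := hA.le_card_cut_of_subset hsub hne
  have hmin' := hA.le_card_cut_of_subset Finset.sdiff_subset hne'
  have hle := hA.card_cut_le
  omega

lemma IsMinCut.card_star_inter_cut_le_one (hA : C.IsMinCut A) (hv : v ∈ A) :
    #{e ∈ C.cut A | v ∈ C.ends e} ≤ 1 := by
  by_contra! htwo
  have herase := card_cut_erase_add_le hv (C := C)
  have hcut := Finset.card_filter_le (C.cut A) fun e => v ∈ C.ends e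
  have hcard := Finset.card_erase_of_mem hv
  have hle := hA.card_cut_le
  have hmin := hA.le_card_cut_of_subset (A.erase_subset v) (Finset.card_pos.1 (by omega)) (by omega)
  omega

lemma IsMinCut.card_crossingFacets (hC : C.IsSpherical) (hA : C.IsMinCut A) :
    #(C.crossingFacets A) = #(C.cut A) ∧ #A + #(C.innerFacets A) = #(C.innerEdges A) + 1 := by
  have hrank := hC.card_add_card_innerFacets_le (hA.links hC) hA.compl_nonempty
  have hrank' := hC.card_add_card_innerFacets_le (hA.compl.links hC) hA.compl.compl_nonempty
  have heuler := hC.euler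
  have hedges := C.card_edges_eq A
  have hfacets := C.card_facets_eq A
  have hcross := hC.card_crossingFacets_le A
  have hvertices := Finset.card_add_card_compl A
  omega

lemma two_mul_collar (C : CubicMap V E F) (A : Finset V) : 2 * C.collar A =
    ∑ v ∈ A, ∑ f ∈ C.crossingFacets A, #{e ∈ C.innerEdges A | f ∈ C.sides e ∧ v ∈ C.ends e} := by
  rw [Finset.sum_comm, collar, Finset.mul_sum]
  refine Finset.sum_congr rfl fun f _ => ?_
  have hsum := C.sum_card_star_eq A {e ∈ C.innerEdges A | f ∈ C.sides e}
  have hcut : ∀ e ∈ ({e ∈ C.innerEdges A | f ∈ C.sides e} : Finset E), e ∉ C.cut A :=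
    fun e he => by simp [cut, mem_innerEdges.1 (Finset.mem_filter.1 he).1]
  rw [Finset.filter_false_of_mem hcut,
    Finset.filter_true_of_mem fun e he => (Finset.mem_filter.1 he).1] at hsum
  simpa only [Finset.filter_filter, Finset.card_empty, add_zero] using hsum.symm

lemma IsMinCut.two_le_sum_of_mem_ends_cut (hA : C.IsMinCut A) (hv : v ∈ A) (he : e ∈ C.cut A)
    (hve : v ∈ C.ends e) :
    2 ≤ ∑ f ∈ C.crossingFacets A, #{e ∈ C.innerEdges A | f ∈ C.sides e ∧ v ∈ C.ends e} := by
  have hinner : ∀ f ∈ C.sides e, 1 ≤ #{e ∈ C.innerEdges A | f ∈ C.sides e ∧ v ∈ C.ends e} := by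
    intro f hf
    obtain ⟨e', he', hne⟩ := Finset.exists_mem_ne
      (by rw [C.card_corner v f ⟨e, hve, hf⟩]; exact one_lt_two) e
    obtain ⟨hve', hf'⟩ := (Finset.mem_filter_univ e').1 he'
    have he'A : e' ∉ C.cut A := fun hcut => hne <| Finset.card_le_one.1
      (hA.card_star_inter_cut_le_one hv) e' (by simp [hcut, hve']) e (by simp [he, hve])
    exact Finset.card_pos.2 ⟨e', by simp [mem_innerEdges_of_notMem_cut hv hve' he'A, hf', hve']⟩
  have hsub : C.sides e ⊆ C.crossingFacets A := fun f hf => C.mem_crossingFacets_of_mem_cut he hf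
  calc 2 = ∑ _f ∈ C.sides e, 1 := by simp [C.card_sides]
    _ ≤ _ := Finset.sum_le_sum hinner
    _ ≤ _ := Finset.sum_le_sum_of_subset hsub

lemma two_le_sum_of_forall_notMem_cut (hv : v ∈ A) (hcut : ∀ e, v ∈ C.ends e → e ∉ C.cut A)
    (hf : f ∈ C.crossingFacets A) (hvf : v ∈ C.corners f) :
    2 ≤ ∑ f ∈ C.crossingFacets A, #{e ∈ C.innerEdges A | f ∈ C.sides e ∧ v ∈ C.ends e} := by
  calc 2 = #{e | v ∈ C.ends e ∧ f ∈ C.sides e} := (C.card_corner v f (mem_corners.1 hvf)).symm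
    _ ≤ #{e ∈ C.innerEdges A | f ∈ C.sides e ∧ v ∈ C.ends e} := Finset.card_le_card fun e he => by
      obtain ⟨hve, hfe⟩ := (Finset.mem_filter_univ e).1 he
      simp [mem_innerEdges_of_notMem_cut hv hve (hcut e hve), hve, hfe]
    _ ≤ _ := Finset.single_le_sum
      (f := fun f => #{e ∈ C.innerEdges A | f ∈ C.sides e ∧ v ∈ C.ends e})
      (fun _ _ => Nat.zero_le _) hf

lemma IsMinCut.card_le_card_core_add_collar (hA : C.IsMinCut A) :
    #A ≤ #(C.core A) + C.collar A := by
  have htwo : ∀ v ∈ A \ C.core A, 2 ≤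
      ∑ f ∈ C.crossingFacets A, #{e ∈ C.innerEdges A | f ∈ C.sides e ∧ v ∈ C.ends e} := by
    intro v hv
    simp only [Finset.mem_sdiff, mem_core, not_and, not_forall, not_not] at hv
    obtain ⟨hvA, hvf⟩ := hv
    obtain ⟨f, hf, hvf⟩ := hvf hvA
    by_cases hcut : ∃ e ∈ C.cut A, v ∈ C.ends e
    · obtain ⟨e, he, hve⟩ := hcut
      exact hA.two_le_sum_of_mem_ends_cut hvA he hve
    · push Not at hcut
      exact two_le_sum_of_forall_notMem_cut hvA (fun e hve he => hcut e he hve) hf hvf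
  have hle := (Finset.card_nsmul_le_sum _ _ 2 htwo).trans
    (Finset.sum_le_sum_of_subset Finset.sdiff_subset)
  rw [← C.two_mul_collar, smul_eq_mul] at hle
  have hcard := Finset.card_sdiff_add_card_eq_card (core_subset (C := C) (A := A))
  omega

lemma notMem_crossingFacets_of_mem_cut_core (he : e ∈ C.cut (C.core A)) (hf : f ∈ C.sides e) :
    f ∉ C.crossingFacets A := fun hfA =>
  have ⟨⟨_, hv, hvcore⟩, _⟩ := mem_cut.1 he
  (mem_core.1 hvcore).2 f hfA (ends_subset_corners hf hv)

lemma disjoint_cut_cut_core (A : Finset V) : Disjoint (C.cut A) (C.cut (C.core A)) := by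
  rw [Finset.disjoint_left]
  intro e he he'
  obtain ⟨f, hf⟩ := C.sides_nonempty e
  exact notMem_crossingFacets_of_mem_cut_core he' hf (C.mem_crossingFacets_of_mem_cut he hf)

lemma exists_mem_ends_sdiff_core (he : e ∈ C.cut A ∪ C.cut (C.core A)) :
    ∃ v ∈ A \ C.core A, v ∈ C.ends e := by
  rcases Finset.mem_union.1 he with he | he
  · obtain ⟨f, hf⟩ := C.sides_nonempty e
    obtain ⟨⟨v, hv, hvA⟩, -⟩ := mem_cut.1 he
    refine ⟨v, Finset.mem_sdiff.2 ⟨hvA, fun hcore => ?_⟩, hv⟩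
    exact (mem_core.1 hcore).2 f (C.mem_crossingFacets_of_mem_cut he hf) (ends_subset_corners hf hv)
  · obtain ⟨⟨v, hv, hvcore⟩, w, hw, hwcore⟩ := mem_cut.1 he
    refine ⟨w, Finset.mem_sdiff.2 ⟨?_, hwcore⟩, hw⟩
    by_contra hwA
    exact Finset.disjoint_right.1 (disjoint_cut_cut_core A) he
      (mem_cut.2 ⟨⟨v, hv, core_subset hvcore⟩, w, hw, hwA⟩)

lemma mem_sides_or_mem_sides {e' : E} (hne : e ≠ e') (he : v ∈ C.ends e) (he' : v ∈ C.ends e')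
    (hf : v ∈ C.corners f) : f ∈ C.sides e ∨ f ∈ C.sides e' := by
  obtain ⟨a, b, c, p, q, r, -, -, -, hstar, ha, hb, hc⟩ := C.exists_star_eq_and_sides_eq v
  simp only [mem_corners, hstar, or_and_right, exists_or, exists_eq_left, ha, hb, hc] at hf
  rcases (hstar e).1 he with rfl | rfl | rfl <;> rcases (hstar e').1 he' with rfl | rfl | rfl <;>
    simp only [ha, hb, hc] <;> tauto

lemma eq_of_mem_cut_core {e' : E} (he : e ∈ C.cut (C.core A))
    (he' : e' ∈ C.cut A ∪ C.cut (C.core A)) (hv : v ∈ A \ C.core A) (hve : v ∈ C.ends e)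
    (hve' : v ∈ C.ends e') : e = e' := by
  by_contra hne
  simp only [Finset.mem_sdiff, mem_core, not_and, not_forall, not_not] at hv
  obtain ⟨f, hf, hvf⟩ := hv.2 hv.1
  have hfe : f ∉ C.sides e := fun h => notMem_crossingFacets_of_mem_cut_core he h hf
  have hfe' : f ∈ C.sides e' := (mem_sides_or_mem_sides hne hve hve' hvf).resolve_left hfe
  rcases Finset.mem_union.1 he' with he' | he'
  · obtain ⟨g, hg, hg'⟩ := exists_common_side hve hve'
    exact notMem_crossingFacets_of_mem_cut_core he hg (C.mem_crossingFacets_of_mem_cut he' hg')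
  · exact notMem_crossingFacets_of_mem_cut_core he' hfe' hf

lemma IsMinCut.card_cut_add_card_cut_core_add_card_core_le (hA : C.IsMinCut A) :
    #(C.cut A) + #(C.cut (C.core A)) + #(C.core A) ≤ #A := by
  have hone : ∀ v ∈ A \ C.core A, #{e ∈ C.cut A ∪ C.cut (C.core A) | v ∈ C.ends e} ≤ 1 := by
    intro v hv
    rw [Finset.card_le_one]
    intro e he e' he'
    rw [Finset.mem_filter] at he he'
    by_cases hcore : e ∈ C.cut (C.core A)
    · exact eq_of_mem_cut_core hcore he'.1 hv he.2 he'.2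
    by_cases hcore' : e' ∈ C.cut (C.core A)
    · exact (eq_of_mem_cut_core hcore' he.1 hv he'.2 he.2).symm
    · simp only [Finset.mem_union, hcore, hcore', or_false] at he he'
      exact Finset.card_le_one.1 (hA.card_star_inter_cut_le_one (Finset.mem_sdiff.1 hv).1) e
        (Finset.mem_filter.2 he) e' (Finset.mem_filter.2 he')
  have hsome : ∀ e ∈ C.cut A ∪ C.cut (C.core A), 1 ≤ #{v ∈ A \ C.core A | v ∈ C.ends e} := by
    intro e he
    obtain ⟨v, hv, hve⟩ := exists_mem_ends_sdiff_core he
    exact Finset.card_pos.2 ⟨v, Finset.mem_filter.2 ⟨hv, hve⟩⟩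
  have hle := Finset.sum_le_card_nsmul _ _ 1 hone
  have hge := Finset.card_nsmul_le_sum _ _ 1 hsome
  rw [sum_card_filter_comm] at hle
  rw [Finset.card_union_of_disjoint (disjoint_cut_cut_core A)] at hge
  have hcard := Finset.card_sdiff_add_card_eq_card (core_subset (C := C) (A := A))
  simp only [smul_eq_mul, mul_one] at hle hge
  omega

/-! ### Fullerenes -/

variable (C) in
/-- The combinatorial map of a fullerene: a sphere tiled by pentagons and hexagons. -/
structure IsFullereneMap : Prop extends C.IsSpherical where
  card_boundary : ∀ f, #(C.boundary f) = 5 ∨ #(C.boundary f) = 6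

variable (C) in
/-- The pentagons among the facets in `T`. -/
def pentagons (T : Finset F) : Finset F := {f ∈ T | #(C.boundary f) = 5}

lemma IsFullereneMap.sum_card_boundary_add_card_pentagons (hC : C.IsFullereneMap) (T : Finset F) :
    ∑ f ∈ T, #(C.boundary f) + #(C.pentagons T) = 6 * #T := by
  rw [pentagons, Finset.card_filter, ← Finset.sum_add_distrib, Finset.card_eq_sum_ones,
    Finset.mul_sum]
  refine Finset.sum_congr rfl fun f _ => ?_
  rcases hC.card_boundary f with hf | hf <;> simp [hf]

lemma IsFullereneMap.card_pentagons_innerFacets (hC : C.IsFullereneMap) (hA : C.IsMinCut A) :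
    #(C.pentagons (C.innerFacets A)) + 2 * #(C.cut A) = C.collar A + 6 := by
  have hpent := hC.sum_card_boundary_add_card_pentagons (C.innerFacets A)
  have hsum := C.sum_card_boundary_innerFacets_add_collar A
  have hcross := hA.card_crossingFacets hC.toIsSpherical
  have hedges := C.two_mul_card_innerEdges_add_card_cut A
  omega

lemma IsFullereneMap.collar_add_collar_compl (hC : C.IsFullereneMap) (hA : C.IsMinCut A) :
    C.collar A + C.collar Aᶜ + #(C.pentagons (C.crossingFacets A)) = 4 * #(C.cut A) := by
  have hpent := hC.sum_card_boundary_add_card_pentagons (C.crossingFacets A)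
  have hsum := C.sum_card_boundary_crossingFacets A
  have hcross := hA.card_crossingFacets hC.toIsSpherical
  omega

lemma innerFacets_compl_union_crossingFacets_subset (A : Finset V) :
    C.innerFacets Aᶜ ∪ C.crossingFacets A ⊆ C.innerFacets (C.core A)ᶜ := by
  intro f hf
  rw [mem_innerFacets]
  intro v hv
  rw [Finset.mem_compl, mem_core]
  rintro ⟨hvA, hvcross⟩
  rcases Finset.mem_union.1 hf with hf | hf
  · exact Finset.mem_compl.1 (mem_innerFacets.1 hf hv) hvA
  · exact hvcross f hf hv

lemma card_pentagons_innerFacets_compl_add_le (A : Finset V) :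
    #(C.pentagons (C.innerFacets Aᶜ)) + #(C.pentagons (C.crossingFacets A)) ≤
      #(C.pentagons (C.innerFacets (C.core A)ᶜ)) := by
  have hdisj : Disjoint (C.pentagons (C.innerFacets Aᶜ)) (C.pentagons (C.crossingFacets A)) := by
    refine Finset.disjoint_filter_filter (Finset.disjoint_left.2 fun f hf hf' => ?_)
    simp only [innerFacets, crossingFacets, Finset.mem_filter_univ] at hf hf'
    exact hf'.2 hf
  rw [← Finset.card_union_of_disjoint hdisj, pentagons, pentagons, ← Finset.filter_union]
  exact Finset.card_le_card
    (Finset.filter_subset_filter _ (innerFacets_compl_union_crossingFacets_subset A))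

lemma IsFullereneMap.exists_isMinCut_collar_le (hC : C.IsFullereneMap) (hA : C.IsMinCut A) :
    ∃ B, C.IsMinCut B ∧ C.collar B ≤ 2 * #(C.cut B) := by
  have hadd := hC.collar_add_collar_compl hA
  rcases le_total (C.collar A) (C.collar Aᶜ) with h | h
  · exact ⟨A, hA, by omega⟩
  · exact ⟨Aᶜ, hA.compl, by rw [cut_compl]; omega⟩

lemma IsFullereneMap.isMinCut_core (hC : C.IsFullereneMap) (hA : C.IsMinCut A)
    (hcollar : C.collar A ≤ 2 * #(C.cut A)) (hcore : #(C.cut (C.core A)) < #(C.core A)) :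
    C.IsMinCut (C.core A) ∧ C.collar (C.core A) ≤ 2 * #(C.cut (C.core A)) ∧
      #(C.core A) < #A := by
  have hpeel := hA.card_cut_add_card_cut_core_add_card_core_le
  have hspread := hA.card_le_card_core_add_collar
  have hpos := hC.card_cut_pos hA.nonempty hA.compl_nonempty
  have hne : (C.core A).Nonempty := Finset.card_pos.1 (by omega)
  have hmin := hA.le_card_cut_of_subset core_subset hne hcore.le
  have hcut : #(C.cut (C.core A)) = #(C.cut A) := by omega
  have hcompl := Finset.compl_subset_compl.2 (core_subset (C := C) (A := A))
  have hB : C.IsMinCut (C.core A) :=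
    ⟨⟨hne, hA.compl_nonempty.mono hcompl, hcore.le,
      hcut ▸ hA.card_cut_le_compl.trans (Finset.card_le_card hcompl)⟩, hcut ▸ hA.card_cut_min⟩
  have hpent := hC.card_pentagons_innerFacets hA.compl
  have hpent' := hC.card_pentagons_innerFacets hB.compl
  have hadd := hC.collar_add_collar_compl hA
  have hadd' := hC.collar_add_collar_compl hB
  have hle := C.card_pentagons_innerFacets_compl_add_le A
  rw [cut_compl] at hpent hpent'
  exact ⟨hB, by omega, by omega⟩

lemma IsFullereneMap.exists_isMinCut_card_core_le (hC : C.IsFullereneMap) (hA : C.IsMinCut A) :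
    ∃ B, C.IsMinCut B ∧ C.collar B ≤ 2 * #(C.cut B) ∧ #(C.core B) ≤ #(C.cut (C.core B)) := by
  obtain ⟨B₀, hB₀⟩ := hC.exists_isMinCut_collar_le hA
  obtain ⟨B, hB, hmin⟩ := Finset.exists_min_image
    {B | C.IsMinCut B ∧ C.collar B ≤ 2 * #(C.cut B)} Finset.card ⟨B₀, by simpa using hB₀⟩
  simp only [Finset.mem_filter_univ] at hB hmin
  refine ⟨B, hB.1, hB.2, ?_⟩
  by_contra! hcore
  obtain ⟨hcut, hcollar, hlt⟩ := hC.isMinCut_core hB.1 hB.2 hcore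
  exact hlt.not_ge (hmin _ ⟨hcut, hcollar⟩)

theorem IsFullereneMap.five_le_card_cut (hC : C.IsFullereneMap) (hA : C.IsNontrivialCut A) :
    5 ≤ #(C.cut A) := by
  obtain ⟨A', hA', hle⟩ := hA.exists_isMinCut
  obtain ⟨B, hB, -, hcore⟩ := hC.exists_isMinCut_card_core_le hA'
  have hmin := hB.card_cut_min A' hA'.toIsNontrivialCut
  have hpent := hC.card_pentagons_innerFacets hB
  have hsub : #(C.pentagons (C.innerFacets B)) ≤ #(C.innerFacets B) := Finset.card_filter_le _ _
  have hcross := hB.card_crossingFacets hC.toIsSpherical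
  have hedges := C.two_mul_card_innerEdges_add_card_cut B
  have hpeel := hB.card_cut_add_card_cut_core_add_card_core_le
  have hspread := hB.card_le_card_core_add_collar
  omega

/-! ### Cycles of facets -/

section Cycle

variable {ι : Type*} {σ : Equiv.Perm ι} {facet : ι → F} {edge : ι → E}

lemma injective_of_disjoint_ends
    (hdisj : ∀ i j, i ≠ j → Disjoint (C.ends (edge i)) (C.ends (edge j))) :
    Function.Injective edge := by
  intro i j hij
  by_contra hne
  have hself := hdisj i j hne
  rw [hij, Finset.disjoint_self_iff_empty] at hself
  exact (C.ends_nonempty (edge j)).ne_empty hself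

variable [Fintype ι]

lemma even_card_cycle (hsides : ∀ i, C.sides (edge i) = {facet i, facet (σ i)})
    (hinj : Function.Injective edge) (f : F) :
    Even #{e ∈ Finset.univ.image edge | f ∈ C.sides e} := by
  have hne : ∀ i, facet i ≠ facet (σ i) := fun i h => by
    simpa [hsides i, h] using C.card_sides (edge i)
  have hshift : #{i | f = facet (σ i)} = #{i | f = facet i} :=
    Finset.card_equiv σ (by simp)
  rw [Finset.filter_image, Finset.card_image_of_injective _ hinj]
  simp only [hsides, Finset.mem_insert, Finset.mem_singleton]
  rw [Finset.filter_or, Finset.card_union_of_disjoint, hshift]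
  · exact ⟨_, rfl⟩
  · exact Finset.disjoint_filter.2 fun i _ h h' => hne i (h.symm.trans h')

lemma card_le_of_forall_exists_mem_ends
    (hdisj : ∀ i j, i ≠ j → Disjoint (C.ends (edge i)) (C.ends (edge j)))
    (hA : ∀ i, ∃ v ∈ C.ends (edge i), v ∈ A) : Fintype.card ι ≤ #A := by
  choose x hx hxA using hA
  refine Finset.card_le_card_of_injOn x (fun i _ => hxA i) fun i _ j _ hij => ?_
  by_contra hne
  exact Finset.disjoint_left.1 (hdisj i j hne) (hx i) (hij ▸ hx j)

theorem IsFullereneMap.five_le_card_of_cycle [Nonempty ι] (hC : C.IsFullereneMap)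
    (hsides : ∀ i, C.sides (edge i) = {facet i, facet (σ i)})
    (hdisj : ∀ i j, i ≠ j → Disjoint (C.ends (edge i)) (C.ends (edge j))) :
    5 ≤ Fintype.card ι := by
  have hinj := injective_of_disjoint_ends hdisj
  obtain ⟨A, hA⟩ := hC.exists_cut_eq (even_card_cycle hsides hinj)
  have hcard : #(C.cut A) = Fintype.card ι := by
    rw [hA, Finset.card_image_of_injective _ hinj, Finset.card_univ]
  have hmem : ∀ i, edge i ∈ C.cut A := fun i => hA ▸ Finset.mem_image_of_mem _ (Finset.mem_univ i)
  have hle := card_le_of_forall_exists_mem_ends hdisj fun i => (mem_cut.1 (hmem i)).1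
  have hle' := card_le_of_forall_exists_mem_ends (A := Aᶜ) hdisj fun i => by
    simpa only [Finset.mem_compl] using (mem_cut.1 (hmem i)).2
  have hpos : 0 < Fintype.card ι := Fintype.card_pos
  rw [← hcard] at hle hle' hpos ⊢
  exact hC.five_le_card_cut
    ⟨Finset.card_pos.1 (by omega), Finset.card_pos.1 (by omega), hle, hle'⟩

end Cycle

end CubicMap

end Combinatorics

/-! ### Convex sets and their faces -/

section Convexity

open Filter Topology

variable {E : Type*} [NormedAddCommGroup E] [NormedSpace ℝ E] {s t : Set E} {p x y : E}

lemma lt_of_mem_interior_of_forall_le {l : StrongDual ℝ E} {c : ℝ} (hl : l ≠ 0)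
    (hs : ∀ a ∈ s, l a ≤ c) (hp : p ∈ interior s) : l p < c := by
  have hopen : IsOpen (l '' interior s) := l.isOpenMap_of_ne_zero hl _ isOpen_interior
  have hsub : l '' interior s ⊆ Iic c := image_subset_iff.2 fun a ha => hs a (interior_subset ha)
  simpa using interior_maximal hsub hopen (mem_image_of_mem l hp)

lemma exists_mem_openSegment_inter_frontier (hp : p ∈ interior s) (hx : x ∉ closure s) :
    ∃ y ∈ openSegment ℝ p x, y ∈ frontier s := by
  by_contra! h
  have hsub : segment ℝ p x ⊆ interior s ∪ (closure s)ᶜ := fun y hy => by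
    rw [← interior_compl, ← compl_frontier_eq_union_interior]
    rintro hys
    refine h y (mem_openSegment_of_ne_left_right ?_ ?_ hy) hys
    · rintro rfl
      exact hys.2 hp
    · rintro rfl
      exact hx hys.1
  have hdisj : Disjoint (interior s) (closure s)ᶜ :=
    disjoint_compl_right.mono_left interior_subset_closure
  have hleft := (convex_segment p x).isPreconnected.subset_left_of_subset_union isOpen_interior
    isClosed_closure.isOpen_compl hdisj hsub ⟨p, left_mem_segment ℝ p x, hp⟩
  exact hx (interior_subset_closure (hleft (right_mem_segment ℝ p x)))

lemma lt_of_mem_openSegment_of_lt {l : E →ₗ[ℝ] ℝ} (hy : y ∈ openSegment ℝ p x) (h : l p < l y) :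
    l y < l x := by
  obtain ⟨a, b, ha, hb, hab, rfl⟩ := hy
  simp only [map_add, map_smul, smul_eq_mul] at h ⊢
  have hpx : l p < l x := by
    refine lt_of_mul_lt_mul_left ?_ hb.le
    linear_combination h + l p * hab
  linear_combination a * hpx + l x * hab

lemma le_or_ge_of_isExtreme_levelSet {l : E →ₗ[ℝ] ℝ} {c : ℝ} (hs : Convex ℝ s)
    (hex : IsExtreme ℝ s {x ∈ s | l x = c}) : (∀ x ∈ s, l x ≤ c) ∨ ∀ x ∈ s, c ≤ l x := by
  by_contra! h
  obtain ⟨⟨y, hy, hcy⟩, z, hz, hzc⟩ := h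
  have hc : c ∈ l.toAffineMap '' openSegment ℝ z y := by
    rw [image_openSegment]
    exact Ioo_subset_openSegment ⟨hzc, hcy⟩
  obtain ⟨w, hw, hwc⟩ := hc
  have hws : w ∈ s := hs.segment_subset hz hy (openSegment_subset_segment ℝ z y hw)
  exact hzc.ne (hex.left_mem_of_mem_openSegment hz hy ⟨hws, hwc⟩ hw).2

variable [FiniteDimensional ℝ E]

lemma exists_mem_forall_notMem_affineSubspace {ι : Type*} [Countable ι] {A : ι → AffineSubspace ℝ E}
    (hA : ∀ i, A i ≠ ⊤) (hs : IsOpen s) (hne : s.Nonempty) : ∃ p ∈ s, ∀ i, p ∉ A i := by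
  borelize E
  by_contra! h
  have hsub : s ⊆ ⋃ i, (A i : Set E) := fun p hp => mem_iUnion.2 (h p hp)
  have hnull : MeasureTheory.Measure.addHaar (⋃ i, (A i : Set E)) = 0 :=
    MeasureTheory.measure_iUnion_null fun i =>
      MeasureTheory.Measure.addHaar_affineSubspace _ _ (hA i)
  exact (hs.measure_pos MeasureTheory.Measure.addHaar hne).ne'
    (MeasureTheory.measure_mono_null hsub hnull)

lemma exists_mem_forall_mem_openSegment (hs : Convex ℝ s) (hne : s.Nonempty) :
    ∃ p ∈ s, ∀ y ∈ affineSpan ℝ s, ∃ z ∈ s, p ∈ openSegment ℝ y z := by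
  obtain ⟨_, hq⟩ := hne.intrinsicInterior hs
  obtain ⟨p, hp, rfl⟩ := mem_intrinsicInterior.1 hq
  refine ⟨p, intrinsicInterior_subset hq, fun y hy => ?_⟩
  have : Nonempty (affineSpan ℝ s) := ⟨p⟩
  have hcont : Continuous fun r : ℝ => AffineMap.lineMap (⟨y, hy⟩ : affineSpan ℝ s) p r :=
    AffineMap.lineMap_continuous
  have hnear : ∀ᶠ r in 𝓝 (1 : ℝ),
      AffineMap.lineMap (⟨y, hy⟩ : affineSpan ℝ s) p r ∈ ((↑) ⁻¹' s : Set (affineSpan ℝ s)) :=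
    hcont.continuousAt.eventually_mem (by simpa [mem_interior_iff_mem_nhds] using hp)
  obtain ⟨r, hrs, hr⟩ := ((hnear.filter_mono nhdsWithin_le_nhds).and
    (self_mem_nhdsWithin (s := Ioi (1 : ℝ)))).exists
  have hr0 : 0 < r := zero_lt_one.trans hr
  refine ⟨_, hrs, ?_⟩
  rw [openSegment_eq_image_lineMap]
  exact ⟨r⁻¹, ⟨inv_pos.2 hr0, inv_lt_one_of_one_lt₀ hr⟩,
    by simp [AffineMap.lineMap_apply, smul_smul, hr0.ne']⟩

lemma mem_of_isExtreme_of_mem_affineSpan (ht : Convex ℝ t) (hex : IsExtreme ℝ s t) (hy : y ∈ s)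
    (hyt : y ∈ affineSpan ℝ t) : y ∈ t := by
  obtain ⟨p, hp, h⟩ := exists_mem_forall_mem_openSegment ht ((affineSpan_nonempty ℝ).1 ⟨y, hyt⟩)
  obtain ⟨z, hz, hpyz⟩ := h y hyt
  exact hex.left_mem_of_mem_openSegment hy (hex.subset hz) hp hpyz

lemma isExposed_of_finrank_vectorSpan_add_one_eq (hs : Convex ℝ s) (ht : Convex ℝ t)
    (hex : IsExtreme ℝ s t)
    (hdim : Module.finrank ℝ (vectorSpan ℝ t) + 1 = Module.finrank ℝ E) : IsExposed ℝ s t := by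
  rintro ⟨q, hq⟩
  have hlt : vectorSpan ℝ t < ⊤ := lt_top_iff_ne_top.2 fun h => by
    rw [h, finrank_top] at hdim
    omega
  obtain ⟨l, hl, hle⟩ := Submodule.exists_le_ker_of_lt_top _ hlt
  have hker : vectorSpan ℝ t = LinearMap.ker l := by
    refine Submodule.eq_of_le_of_finrank_le hle ?_
    have := Module.Dual.finrank_ker_add_one_of_ne_zero (f := l) hl
    omega
  have hlevel : t = {x ∈ s | l x = l q} := by
    ext x
    refine ⟨fun hx => ⟨hex.subset hx, ?_⟩, fun ⟨hxs, hx⟩ => ?_⟩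
    · simpa [sub_eq_zero] using hle (vsub_mem_vectorSpan ℝ hx hq)
    · refine mem_of_isExtreme_of_mem_affineSpan ht hex hxs ?_
      rw [← AffineSubspace.vsub_right_mem_direction_iff_mem (mem_affineSpan ℝ hq),
        direction_affineSpan, hker]
      simp [hx]
  have hqs : q ∈ s := hex.subset hq
  rcases le_or_ge_of_isExtreme_levelSet hs (hlevel ▸ hex) with h | h
  · refine ⟨l.toContinuousLinearMap, hlevel.trans (ext fun x => ?_)⟩
    exact and_congr_right fun hx => ⟨fun hxq y hy => (h y hy).trans_eq hxq.symm,
      fun hmax => (h x hx).antisymm (hmax q hqs)⟩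
  · refine ⟨-l.toContinuousLinearMap, hlevel.trans (ext fun x => ?_)⟩
    exact and_congr_right fun hx => ⟨fun hxq y hy => neg_le_neg (hxq.trans_le (h y hy)),
      fun hmax => (neg_le_neg_iff.1 (hmax q hqs)).antisymm (h x hx)⟩

lemma exists_dual_injOn {M : Type*} [AddCommGroup M] [Module ℝ M] {s : Set M} (hs : s.Finite) :
    ∃ l : Module.Dual ℝ M, InjOn l s := by
  have : Finite {z ∈ s ×ˢ s | z.1 ≠ z.2} := (hs.prod hs).subset (sep_subset _ _)
  obtain ⟨l, hl⟩ := Module.exists_dual_forall_apply_ne_zero (K := ℝ)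
    (fun z : {z ∈ s ×ˢ s | z.1 ≠ z.2} => z.1.1 - z.1.2) fun z => sub_ne_zero.2 z.2.2
  refine ⟨l, fun v hv w hw h => ?_⟩
  by_contra hne
  exact hl ⟨(v, w), ⟨hv, hw⟩, hne⟩ (by simp [h])

end Convexity

/-! ### Facets of 3-polytopes -/

section Polytope

variable {P F : Set E3} {x v : E3}

namespace IsPolytope

lemma isCompact (hP : IsPolytope P) : IsCompact P := by
  obtain ⟨V, rfl⟩ := hP
  exact V.finite_toSet.isCompact_convexHull ℝ

lemma convex (hP : IsPolytope P) : Convex ℝ P := by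
  obtain ⟨V, rfl⟩ := hP
  exact convex_convexHull _ _

lemma finite_extremePoints (hP : IsPolytope P) : (P.extremePoints ℝ).Finite := by
  obtain ⟨V, rfl⟩ := hP
  exact V.finite_toSet.subset extremePoints_convexHull_subset

end IsPolytope

namespace IsFaceOf

lemma convexHull_inter_extremePoints (hF : IsFaceOf F P) (hP : IsPolytope P) :
    convexHull ℝ (F ∩ P.extremePoints ℝ) = F := by
  have hcompact : IsCompact F := hP.isCompact.of_isClosed_subset hF.2.1 hF.2.2.2.subset
  have hfin : (F ∩ P.extremePoints ℝ).Finite := hP.finite_extremePoints.inter_of_right _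
  rw [← (hfin.isClosed_convexHull ℝ).closure_eq, ← hF.2.2.2.extremePoints_eq]
  exact closure_convexHull_extremePoints hcompact hF.2.2.1

lemma inter_extremePoints_nonempty (hF : IsFaceOf F P) (hP : IsPolytope P) :
    (F ∩ P.extremePoints ℝ).Nonempty := by
  rw [← convexHull_nonempty_iff (𝕜 := ℝ), hF.convexHull_inter_extremePoints hP]
  exact hF.1

end IsFaceOf

lemma IsPolytope.finite_setOf_isFaceOf (hP : IsPolytope P) : {F | IsFaceOf F P}.Finite := by
  refine Set.Finite.of_finite_image
    (hP.finite_extremePoints.finite_subsets.subset (image_subset_iff.2 fun F _ =>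
      inter_subset_right (s := F))) fun F hF G hG h => ?_
  rw [← IsFaceOf.convexHull_inter_extremePoints hF hP,
    ← IsFaceOf.convexHull_inter_extremePoints hG hP]
  exact congrArg _ h

lemma isVertexOf_iff : IsVertexOf v P ↔ v ∈ P.extremePoints ℝ := by
  simp [IsVertexOf, IsFaceOf, convex_singleton]

lemma isFaceOf_of_isExposed (hP : IsPolytope P) (hF : IsExposed ℝ P F) (hne : F.Nonempty) :
    IsFaceOf F P :=
  ⟨hne, hF.isClosed hP.isCompact.isClosed, hF.convex hP.convex, hF.isExtreme⟩

lemma IsFacetOf.isExposed (hF : IsFacetOf F P) (hP : IsPolytope P) : IsExposed ℝ P F :=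
  isExposed_of_finrank_vectorSpan_add_one_eq hP.convex hF.1.2.2.1 hF.1.2.2.2 <| by
    rw [← setDim, hF.2]
    simp

lemma IsPolytope.nonempty_interior (hP : IsPolytope P) (hdim : setDim P = 3) :
    (interior P).Nonempty := by
  have hne : P.Nonempty := nonempty_iff_ne_empty.2 <| by
    rintro rfl
    rw [setDim, vectorSpan_empty] at hdim
    simp at hdim
  rw [hP.convex.interior_nonempty_iff_affineSpan_eq_top,
    AffineSubspace.affineSpan_eq_top_iff_vectorSpan_eq_top_of_nonempty ℝ E3 E3 hne]
  exact Submodule.eq_top_of_finrank_eq (by rw [← setDim, hdim]; simp)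

lemma setDim_toExposed_le_two {l : StrongDual ℝ E3} (hl : l ≠ 0) : setDim (l.toExposed P) ≤ 2 := by
  have hle : vectorSpan ℝ (l.toExposed P) ≤ LinearMap.ker l.toLinearMap := by
    rw [vectorSpan_def, Submodule.span_le]
    rintro _ ⟨a, ha, b, hb, rfl⟩
    simpa [sub_eq_zero] using (hb.2 a ha.1).antisymm (ha.2 b hb.1)
  have hker := Module.Dual.finrank_ker_add_one_of_ne_zero (f := l.toLinearMap) fun h =>
    hl (ContinuousLinearMap.coe_injective h)
  have := Submodule.finrank_mono hle
  rw [finrank_euclideanSpace_fin] at hker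
  rw [setDim]
  omega

lemma affineSpan_triple_ne_top (x u w : E3) : affineSpan ℝ {x, u, w} ≠ ⊤ := by
  intro h
  have htriple := finrank_vectorSpan_insert_le_set ℝ {u, w} x
  have hpair := collinear_iff_finrank_le_one.1 (collinear_pair ℝ u w)
  rw [← direction_affineSpan, h, AffineSubspace.direction_top, finrank_top,
    finrank_euclideanSpace_fin] at htriple
  omega

lemma IsFaceOf.exists_subset_affineSpan_pair (hF : IsFaceOf F P) (hP : IsPolytope P)
    (hdim : setDim F ≤ 1) :
    ∃ u ∈ P.extremePoints ℝ, ∃ w ∈ P.extremePoints ℝ, F ⊆ affineSpan ℝ {u, w} := by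
  have hcol : Collinear ℝ F := collinear_iff_finrank_le_one.2 hdim
  obtain ⟨u, huF, hu⟩ := hF.inter_extremePoints_nonempty hP
  rcases (F ∩ P.extremePoints ℝ).subsingleton_or_nontrivial with hsub | hnt
  · refine ⟨u, hu, u, hu, fun y hy => ?_⟩
    rw [← hF.convexHull_inter_extremePoints hP,
      hsub.eq_singleton_of_mem ⟨huF, hu⟩, convexHull_singleton] at hy
    simpa using hy
  · obtain ⟨w, ⟨hwF, hw⟩, hne⟩ := hnt.exists_ne u
    exact ⟨u, hu, w, hw, fun y hy => hcol.mem_affineSpan_of_mem_of_ne huF hwF hy hne.symm⟩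

lemma IsFacetOf.exists_eq_toExposed (hF : IsFacetOf F P) (hP : IsPolytope P) :
    ∃ l : StrongDual ℝ E3, F = l.toExposed P :=
  hF.isExposed hP hF.1.1

/-- Sighting `x` from an interior point in general position, the segment leaves the polytope
through the relative interior of a facet. -/
lemma exists_isFacetOf_forall_lt (hP : IsPolytope P) (hdim : setDim P = 3) (hx : x ∉ P) :
    ∃ F, IsFacetOf F P ∧
      ∀ l : StrongDual ℝ E3, F = l.toExposed P → ∀ y ∈ F, l y < l x := by
  have := hP.finite_extremePoints.to_subtype
  have hclosed : IsClosed P := hP.isCompact.isClosed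
  have hint := hP.nonempty_interior hdim
  obtain ⟨p, hp, hgen⟩ := exists_mem_forall_notMem_affineSubspace
    (fun z : P.extremePoints ℝ × P.extremePoints ℝ => affineSpan_triple_ne_top x z.1 z.2)
    isOpen_interior hint
  obtain ⟨y, hy, hfr⟩ := exists_mem_openSegment_inter_frontier hp (hclosed.closure_eq.symm ▸ hx)
  rw [hclosed.frontier_eq] at hfr
  obtain ⟨f, hf, hmax⟩ := geometric_hahn_banach_of_nonempty_interior_point hP.convex hfr.2 hint
  have hyF : y ∈ f.toExposed P := ⟨hfr.1, hmax⟩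
  have hface : IsFaceOf (f.toExposed P) P :=
    isFaceOf_of_isExposed hP ContinuousLinearMap.toExposed.isExposed ⟨y, hyF⟩
  have htwo : 2 ≤ setDim (f.toExposed P) := by
    by_contra! hlt
    obtain ⟨u, hu, w, hw, hline⟩ := hface.exists_subset_affineSpan_pair hP (by omega)
    have hwbtw : Wbtw ℝ p y x := mem_segment_iff_wbtw.1 (openSegment_subset_segment ℝ p x hy)
    refine hgen (⟨u, hu⟩, ⟨w, hw⟩) (affineSpan_le.2 ?_
      (hwbtw.left_mem_affineSpan_of_right_ne fun h => hx (h ▸ hfr.1)))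
    exact insert_subset (mem_affineSpan ℝ (by simp))
      (singleton_subset_iff.2 (affineSpan_mono ℝ (subset_insert _ _) (hline hyF)))
  refine ⟨_, ⟨hface, (setDim_toExposed_le_two hf).antisymm htwo⟩, fun l hl z hz => ?_⟩
  rw [hl] at hyF hz
  have hl0 : l ≠ 0 := by
    rintro rfl
    have := setDim_toExposed_le_two (P := P) hf
    rw [hl] at this
    simp [ContinuousLinearMap.toExposed, hdim] at this
  have hpy : l p < l y := lt_of_mem_interior_of_forall_le hl0 hyF.2 hp
  have hzy : l z = l y := (hyF.2 z hz.1).antisymm (hz.2 y hyF.1)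
  exact hzy.trans_lt (lt_of_mem_openSegment_of_lt (l := l.toLinearMap) hy hpy)

end Polytope

/-! ### Simplicial corners -/

section Corner

open Topology

variable {ι E : Type*} [NormedAddCommGroup E] [NormedSpace ℝ E]

/-- Near `v`, the set `P` coincides with the simplicial cone with apex `v` spanned by the basis
`b`. -/
structure IsSimplicialCorner (P : Set E) (v : E) (b : Module.Basis ι ℝ E) : Prop where
  nonneg : ∀ x ∈ P, ∀ i, 0 ≤ b.repr (x - v) i
  eventually_mem : ∀ d, (∀ i, 0 ≤ b.repr d i) → ∀ᶠ ε in 𝓝[>] (0 : ℝ), v + ε • d ∈ P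

/-- The part of `P` lying in the span of the basis vectors with index in `T`, seen from `v`. -/
def cornerFace (P : Set E) (v : E) (b : Module.Basis ι ℝ E) (T : Finset ι) : Set E :=
  {x ∈ P | ∀ i ∉ T, b.repr (x - v) i = 0}

variable {P H : Set E} {v x : E} {b : Module.Basis ι ℝ E} {S T : Finset ι}

lemma cornerFace_mono (h : S ⊆ T) : cornerFace P v b S ⊆ cornerFace P v b T :=
  fun _ hx => ⟨hx.1, fun i hi => hx.2 i fun hiS => hi (h hiS)⟩

namespace IsSimplicialCorner

variable (h : IsSimplicialCorner P v b)
include h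

lemma mem_cornerFace (T : Finset ι) : v ∈ cornerFace P v b T := by
  obtain ⟨ε, hε⟩ := (h.eventually_mem 0 (by simp)).exists
  exact ⟨by simpa using hε, by simp⟩

lemma exists_add_smul_mem_cornerFace (i : ι) :
    ∃ ε : ℝ, 0 < ε ∧ v + ε • b i ∈ cornerFace P v b {i} := by
  classical
  have hnonneg : ∀ j, 0 ≤ b.repr (b i) j := fun j => by
    rw [b.repr_self_apply]
    split_ifs <;> simp
  obtain ⟨ε, hε, hpos⟩ := ((h.eventually_mem _ hnonneg).and self_mem_nhdsWithin).exists
  refine ⟨ε, hpos, hε, fun j hj => ?_⟩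
  simp [Finsupp.single_eq_of_ne (Finset.notMem_singleton.1 hj)]

lemma cornerFace_subset_cornerFace_iff : cornerFace P v b S ⊆ cornerFace P v b T ↔ S ⊆ T := by
  refine ⟨fun hsub i hi => ?_, cornerFace_mono⟩
  obtain ⟨ε, hε, hmem⟩ := h.exists_add_smul_mem_cornerFace i
  by_contra hiT
  simpa [hε.ne'] using (hsub (cornerFace_mono (Finset.singleton_subset_iff.2 hi) hmem)).2 i hiT

lemma cornerFace_injective : Function.Injective (cornerFace P v b) := fun _ _ heq =>
  (h.cornerFace_subset_cornerFace_iff.1 heq.subset).antisymm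
    (h.cornerFace_subset_cornerFace_iff.1 heq.superset)

lemma vectorSpan_cornerFace (T : Finset ι) :
    vectorSpan ℝ (cornerFace P v b T) = Submodule.span ℝ (b '' T) := by
  apply le_antisymm
  · rw [vectorSpan_eq_span_vsub_set_right ℝ (h.mem_cornerFace T), Submodule.span_le]
    rintro _ ⟨x, hx, rfl⟩
    refine b.mem_span_image.2 fun i hi => ?_
    by_contra hiT
    exact Finsupp.mem_support_iff.1 hi (hx.2 i hiT)
  · rw [Submodule.span_le]
    rintro _ ⟨i, hi, rfl⟩
    obtain ⟨ε, hε, hmem⟩ := h.exists_add_smul_mem_cornerFace i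
    have hvsub := vsub_mem_vectorSpan ℝ
      (cornerFace_mono (Finset.singleton_subset_iff.2 hi) hmem) (h.mem_cornerFace T)
    rw [vsub_eq_sub, add_sub_cancel_left] at hvsub
    exact (Submodule.smul_mem_iff _ hε.ne').1 hvsub

lemma finrank_vectorSpan_cornerFace (T : Finset ι) :
    Module.finrank ℝ (vectorSpan ℝ (cornerFace P v b T)) = T.card := by
  rw [h.vectorSpan_cornerFace, image_eq_range]
  refine (finrank_span_eq_card (b.linearIndependent.comp _ Subtype.val_injective)).trans ?_
  simp

lemma basis_mem_vectorSpan_of_isExtreme (hH : Convex ℝ H) (hex : IsExtreme ℝ P H) (hv : v ∈ H)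
    (hx : x ∈ H) {i : ι} (hxi : b.repr (x - v) i ≠ 0) : b i ∈ vectorSpan ℝ H := by
  classical
  have hnonneg := h.nonneg x (hex.subset hx)
  set c := b.repr (x - v) i
  have hc : 0 < c := (hnonneg i).lt_of_ne' hxi
  have hleft : ∀ j, 0 ≤ b.repr (c • b i) j := fun j => by
    rcases eq_or_ne j i with rfl | hj
    · simp [hc.le]
    · simp [Finsupp.single_eq_of_ne hj]
  have hright : ∀ j, 0 ≤ b.repr ((x - v) - c • b i) j := fun j => by
    rcases eq_or_ne j i with rfl | hj
    · simp [c]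
    · simpa [Finsupp.single_eq_of_ne hj] using hnonneg j
  obtain ⟨ε, ⟨⟨hleft, hright⟩, hε⟩, hpos : 0 < ε⟩ :=
    (((h.eventually_mem _ hleft).and (h.eventually_mem _ hright)).and
      (eventually_nhdsWithin_of_eventually_nhds (eventually_le_nhds one_pos))).and
      self_mem_nhdsWithin |>.exists
  have hmid : v + (ε / 2) • (x - v) ∈ H :=
    hH.add_smul_sub_mem hv hx ⟨by positivity, by linarith⟩
  have hmem : v + ε • c • b i ∈ H := by
    refine hex.left_mem_of_mem_openSegment hleft hright hmid
      ⟨1 / 2, 1 / 2, by norm_num, by norm_num, by norm_num, ?_⟩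
    module
  have hvsub := vsub_mem_vectorSpan ℝ hmem hv
  rw [vsub_eq_sub, add_sub_cancel_left, smul_smul] at hvsub
  exact (Submodule.smul_mem_iff _ (mul_pos hpos hc).ne').1 hvsub

lemma exists_eq_cornerFace [Finite ι] (hH : Convex ℝ H) (hex : IsExtreme ℝ P H) (hv : v ∈ H) :
    ∃ T, H = cornerFace P v b T := by
  classical
  cases nonempty_fintype ι
  have : FiniteDimensional ℝ E := b.finiteDimensional_of_finite
  refine ⟨Finset.univ.filter fun i => ∃ x ∈ H, b.repr (x - v) i ≠ 0,
    Subset.antisymm (fun x hx => ⟨hex.subset hx, fun i hi => ?_⟩) fun x hx => ?_⟩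
  · by_contra hxi
    exact hi (Finset.mem_filter.2 ⟨Finset.mem_univ i, x, hx, hxi⟩)
  · refine mem_of_isExtreme_of_mem_affineSpan hH hex hx.1 ?_
    rw [← AffineSubspace.vsub_right_mem_direction_iff_mem (mem_affineSpan ℝ hv),
      direction_affineSpan]
    have hsub := vsub_mem_vectorSpan ℝ hx (h.mem_cornerFace _)
    rw [h.vectorSpan_cornerFace] at hsub
    refine Submodule.span_le.2 ?_ hsub
    rintro _ ⟨i, hi, rfl⟩
    obtain ⟨y, hy, hyi⟩ := (Finset.mem_filter.1 hi).2
    exact h.basis_mem_vectorSpan_of_isExtreme hH hex hv hy hyi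

lemma isExposed_cornerFace [Finite ι] (T : Finset ι) : IsExposed ℝ P (cornerFace P v b T) := by
  classical
  cases nonempty_fintype ι
  have : FiniteDimensional ℝ E := b.finiteDimensional_of_finite
  intro _
  let f : E →ₗ[ℝ] ℝ := -∑ i ∈ Tᶜ, b.coord i
  have hf : ∀ x, f v - f x = ∑ i ∈ Tᶜ, b.repr (x - v) i := fun x => by
    rw [← neg_sub, ← map_sub]
    simp [f]
  have hnonneg : ∀ x ∈ P, ∀ i ∈ Tᶜ, 0 ≤ b.repr (x - v) i := fun x hx i _ => h.nonneg x hx i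
  refine ⟨f.toContinuousLinearMap, Set.ext fun x => and_congr_right fun hx => ?_⟩
  have hzero : (∀ i ∉ T, b.repr (x - v) i = 0) ↔ f v - f x = 0 := by
    rw [hf, Finset.sum_eq_zero_iff_of_nonneg (hnonneg x hx)]
    simp only [Finset.mem_compl]
  have hle : ∀ y ∈ P, f y ≤ f v := fun y hy =>
    sub_nonneg.1 (hf y ▸ Finset.sum_nonneg (hnonneg y hy))
  rw [hzero, sub_eq_zero]
  exact ⟨fun heq y hy => (hle y hy).trans_eq heq,
    fun hmax => (hmax v (h.mem_cornerFace T).1).antisymm (hle x hx)⟩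

lemma le_of_mem_cornerFace {l : E →ₗ[ℝ] ℝ}
    (hl : ∀ i ∈ T, ∀ w ∈ cornerFace P v b {i}, l v ≤ l w) (hx : x ∈ cornerFace P v b T) :
    l v ≤ l x := by
  have hterm : ∀ i, 0 ≤ b.repr (x - v) i * l (b i) := fun i => by
    by_cases hi : i ∈ T
    · obtain ⟨ε, hε, hmem⟩ := h.exists_add_smul_mem_cornerFace i
      have hle := hl i hi _ hmem
      rw [map_add, map_smul, smul_eq_mul, le_add_iff_nonneg_right] at hle
      exact mul_nonneg (h.nonneg x hx.1 i) (nonneg_of_mul_nonneg_right hle hε)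
    · rw [hx.2 i hi, zero_mul]
  have hsum : l (x - v) = (b.repr (x - v)).sum fun i c => c * l (b i) := by
    conv_lhs => rw [← b.linearCombination_repr (x - v)]
    simp only [Finsupp.linearCombination_apply, map_finsuppSum, map_smul, smul_eq_mul]
  rw [← sub_nonneg, ← map_sub, hsum]
  exact Finset.sum_nonneg fun i _ => hterm i

end IsSimplicialCorner

end Corner

section SimpleCorner

open Filter Topology

variable {P : Set E3} {v d : E3}

lemma eventually_add_smul_mem (hP : IsPolytope P) (hdim : setDim P = 3) (hv : v ∈ P)
    (hd : ∀ F, IsFacetOf F P → v ∈ F → ∃ l : StrongDual ℝ E3, F = l.toExposed P ∧ l d ≤ 0) :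
    ∀ᶠ ε in 𝓝[>] (0 : ℝ), v + ε • d ∈ P := by
  have hfin : {F | IsFacetOf F P}.Finite := hP.finite_setOf_isFaceOf.subset fun F hF => hF.1
  have hfacet : ∀ F ∈ {F | IsFacetOf F P}, ∀ᶠ ε in 𝓝[>] (0 : ℝ),
      ∃ l : StrongDual ℝ E3, F = l.toExposed P ∧ ∃ y ∈ F, l (v + ε • d) ≤ l y := by
    intro F hF
    by_cases hvF : v ∈ F
    · obtain ⟨l, hl, hld⟩ := hd F hF hvF
      filter_upwards [self_mem_nhdsWithin] with ε hε
      refine ⟨l, hl, v, hvF, ?_⟩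
      rw [map_add, map_smul, smul_eq_mul]
      exact add_le_of_nonpos_right (mul_nonpos_of_nonneg_of_nonpos (le_of_lt hε) hld)
    · obtain ⟨l, hl⟩ := hF.exists_eq_toExposed hP
      obtain ⟨y, hy⟩ := hF.1.1
      have hvy : l v < l y := by
        by_contra! hle
        rw [hl] at hy hvF
        exact hvF ⟨hv, fun z hz => (hy.2 z hz).trans hle⟩
      have hcont : Continuous fun ε : ℝ => l (v + ε • d) := by fun_prop
      have hnear : ∀ᶠ ε in 𝓝 (0 : ℝ), l (v + ε • d) < l y :=
        hcont.continuousAt.eventually_lt_const (by simpa using hvy)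
      filter_upwards [eventually_nhdsWithin_of_eventually_nhds hnear] with ε hε
      exact ⟨l, hl, y, hy, hε.le⟩
  filter_upwards [(eventually_all_finite hfin).2 hfacet] with ε hε
  by_contra hmem
  obtain ⟨F, hF, hlt⟩ := exists_isFacetOf_forall_lt hP hdim hmem
  obtain ⟨l, hl, y, hy, hle⟩ := hε F hF
  exact (hlt l hl y hy).not_ge hle

/-- The basis is dual to outer normals of the three facets at `v`; the normals are independent
because `v` is extreme. -/
lemma IsSimplePolytope3.exists_isSimplicialCorner (hP : IsSimplePolytope3 P)
    (hv : v ∈ P.extremePoints ℝ) :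
    ∃ b : Module.Basis (Fin 3) ℝ E3, IsSimplicialCorner P v b := by
  obtain ⟨hpoly, hdim, hsimple⟩ := hP
  have hcard : Nat.card {F | IsFacetOf F P ∧ v ∈ F} = 3 := by
    rw [Nat.card_coe_set_eq, hsimple v (isVertexOf_iff.2 hv)]
  have : Finite {F | IsFacetOf F P ∧ v ∈ F} := Nat.finite_of_card_ne_zero (by omega)
  let facet := (Finite.equivFinOfCardEq hcard).symm
  choose l hl using fun i => (facet i).2.1.exists_eq_toExposed hpoly
  have hmax : ∀ i, v ∈ (l i).toExposed P := fun i => hl i ▸ (facet i).2.2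
  have hmem : ∀ d, (∀ i, l i d ≤ 0) → ∀ᶠ ε in 𝓝[>] (0 : ℝ), v + ε • d ∈ P := fun d hd =>
    eventually_add_smul_mem hpoly hdim hv.1 fun F hF hvF => by
      obtain ⟨i, hi⟩ := facet.surjective ⟨F, hF, hvF⟩
      exact ⟨l i, by rw [← hl i, hi], hd i⟩
  let ψ : E3 →ₗ[ℝ] Fin 3 → ℝ := LinearMap.pi fun i => -(l i).toLinearMap
  have hinj : Function.Injective ψ := by
    refine (injective_iff_map_eq_zero ψ).2 fun d hd => ?_
    have hld : ∀ i, l i d = 0 := fun i => neg_eq_zero.1 (congrFun hd i)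
    obtain ⟨ε, ⟨hpos, hneg⟩, hε⟩ := (((hmem d fun i => (hld i).le).and
      (hmem (-d) fun i => by simp [hld i])).and self_mem_nhdsWithin).exists
    have hmid : v ∈ openSegment ℝ (v + ε • d) (v + ε • -d) :=
      ⟨1 / 2, 1 / 2, by norm_num, by norm_num, by norm_num, by module⟩
    have heq := hv.2 hpos hneg hmid
    simpa [ne_of_gt hε] using heq
  let b := Module.Basis.ofEquivFun (ψ.linearEquivOfInjective hinj (by simp))
  have hb : ∀ x i, b.repr x i = -l i x := fun x i => rfl
  refine ⟨b, fun x hx i => ?_, fun d hd => hmem d fun i => ?_⟩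
  · rw [hb, map_sub, neg_sub]
    exact sub_nonneg.2 ((hmax i).2 x hx)
  · exact neg_nonneg.1 (hb d i ▸ hd i)

end SimpleCorner

/-! ### Faces at a vertex -/

section FaceCounts

variable {P F e : Set E3} {v x : E3} {b : Module.Basis (Fin 3) ℝ E3}

lemma ncard_extremePoints_eq_two {E : Type*} [NormedAddCommGroup E] [NormedSpace ℝ E] {s : Set E}
    (hs : IsCompact s) (hconv : Convex ℝ s) (hdim : Module.finrank ℝ (vectorSpan ℝ s) = 1) :
    (s.extremePoints ℝ).ncard = 2 := by
  have hcol : Collinear ℝ s := by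
    have := Module.finite_of_finrank_eq_succ hdim
    exact collinear_iff_finrank_le_one.2 hdim.le
  have hnt : (s.extremePoints ℝ).Nontrivial := by
    rw [← not_subsingleton_iff]
    intro hsub
    have hs' : s.Subsingleton := by
      rwa [← closure_convexHull_extremePoints hs hconv, hsub.convex.convexHull_eq,
        hsub.finite.isClosed.closure_eq]
    rw [vectorSpan_of_subsingleton ℝ hs', finrank_bot] at hdim
    omega
  obtain ⟨x, hx, y, hy, hxy⟩ := hnt
  refine ncard_eq_two.2 ⟨x, y, hxy, Subset.antisymm (fun z hz => ?_) (pair_subset hx hy)⟩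
  simp only [mem_extremePoints_iff_forall_segment, mem_segment_iff_wbtw] at hx hy hz
  have hxyz : Collinear ℝ {x, y, z} :=
    hcol.subset (insert_subset hx.1 (pair_subset hy.1 hz.1))
  rcases hxyz.wbtw_or_wbtw_or_wbtw with h | h | h
  · have := hy.2 _ hx.1 _ hz.1 h
    grind
  · have := hz.2 _ hy.1 _ hx.1 h
    grind
  · have := hx.2 _ hz.1 _ hy.1 h
    grind

lemma IsEdgeOf.ncard_extremePoints_inter (he : IsEdgeOf e P) (hP : IsPolytope P) :
    {v | v ∈ P.extremePoints ℝ ∧ v ∈ e}.ncard = 2 := by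
  rw [← ncard_extremePoints_eq_two (hP.isCompact.of_isClosed_subset he.1.2.1 he.1.2.2.2.subset)
    he.1.2.2.1 he.2, he.1.2.2.2.extremePoints_eq, inter_comm]
  rfl

namespace IsSimplicialCorner

variable (h : IsSimplicialCorner P v b) (hP : IsPolytope P)
include h hP

lemma isFaceOf_cornerFace (T : Finset (Fin 3)) : IsFaceOf (cornerFace P v b T) P :=
  isFaceOf_of_isExposed hP (h.isExposed_cornerFace T) ⟨v, h.mem_cornerFace T⟩

lemma isEdgeOf_cornerFace_iff {T : Finset (Fin 3)} :
    IsEdgeOf (cornerFace P v b T) P ↔ T.card = 1 := by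
  simp [IsEdgeOf, h.isFaceOf_cornerFace hP, setDim, h.finrank_vectorSpan_cornerFace]

lemma isFacetOf_cornerFace_iff {T : Finset (Fin 3)} :
    IsFacetOf (cornerFace P v b T) P ↔ T.card = 2 := by
  simp [IsFacetOf, h.isFaceOf_cornerFace hP, setDim, h.finrank_vectorSpan_cornerFace]

omit hP in
lemma ncard_setOf_isFaceOf {p : Set E3 → Prop} (hp : ∀ F, p F → IsFaceOf F P ∧ v ∈ F) :
    {F | p F}.ncard = {T | p (cornerFace P v b T)}.ncard := by
  have himage : {F | p F} = cornerFace P v b '' {T | p (cornerFace P v b T)} := by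
    refine Subset.antisymm (fun F hF => ?_) (image_subset_iff.2 fun T hT => hT)
    obtain ⟨hface, hv⟩ := hp F hF
    obtain ⟨T, rfl⟩ := h.exists_eq_cornerFace hface.2.2.1 hface.2.2.2 hv
    exact ⟨T, hF, rfl⟩
  rw [himage, ncard_image_of_injective _ h.cornerFace_injective]

lemma ncard_edges : {e | IsEdgeOf e P ∧ v ∈ e}.ncard = 3 := by
  rw [h.ncard_setOf_isFaceOf fun e he => ⟨he.1.1, he.2⟩]
  simp only [h.isEdgeOf_cornerFace_iff hP, h.mem_cornerFace, and_true, ncard_eq_toFinset_card']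
  decide

lemma ncard_edges_of_isFacetOf (hF : IsFacetOf F P) (hv : v ∈ F) :
    {e | IsEdgeOf e P ∧ v ∈ e ∧ e ⊆ F}.ncard = 2 := by
  obtain ⟨T, rfl⟩ := h.exists_eq_cornerFace hF.1.2.2.1 hF.1.2.2.2 hv
  rw [h.ncard_setOf_isFaceOf fun e he => ⟨he.1.1, he.2.1⟩]
  simp only [h.isEdgeOf_cornerFace_iff hP, h.mem_cornerFace, h.cornerFace_subset_cornerFace_iff,
    true_and]
  have hcount : ∀ T : Finset (Fin 3), T.card = 2 →
      {S : Finset (Fin 3) | S.card = 1 ∧ S ⊆ T}.toFinset.card = 2 := by decide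
  rw [ncard_eq_toFinset_card', hcount T ((h.isFacetOf_cornerFace_iff hP).1 hF)]

lemma ncard_facets_of_isEdgeOf (he : IsEdgeOf e P) (hv : v ∈ e) :
    {F | IsFacetOf F P ∧ e ⊆ F}.ncard = 2 := by
  obtain ⟨T, rfl⟩ := h.exists_eq_cornerFace he.1.2.2.1 he.1.2.2.2 hv
  rw [h.ncard_setOf_isFaceOf fun F hF => ⟨hF.1.1, hF.2 hv⟩]
  simp only [h.isFacetOf_cornerFace_iff hP, h.cornerFace_subset_cornerFace_iff]
  have hcount : ∀ T : Finset (Fin 3), T.card = 1 →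
      {S : Finset (Fin 3) | S.card = 2 ∧ T ⊆ S}.toFinset.card = 2 := by decide
  rw [ncard_eq_toFinset_card', hcount T ((h.isEdgeOf_cornerFace_iff hP).1 he)]

end IsSimplicialCorner

lemma IsFaceOf.forall_le {l : E3 →ₗ[ℝ] ℝ} {c : ℝ} (hF : IsFaceOf F P) (hP : IsPolytope P)
    (hl : ∀ w ∈ P.extremePoints ℝ, w ∈ F → c ≤ l w) : ∀ x ∈ F, c ≤ l x := by
  rw [← hF.convexHull_inter_extremePoints hP]
  exact convexHull_min (fun w hw => hl w hw.2 hw.1) (convex_halfSpace_ge l.isLinear c)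

lemma IsSimplePolytope3.forall_le_of_forall_edge {l : E3 →ₗ[ℝ] ℝ} (hP : IsSimplePolytope3 P)
    (hF : IsFaceOf F P) (hv : v ∈ P.extremePoints ℝ) (hvF : v ∈ F)
    (hl : ∀ e, IsEdgeOf e P → v ∈ e → e ⊆ F → ∀ w ∈ P.extremePoints ℝ, w ∈ e → l v ≤ l w) :
    ∀ x ∈ F, l v ≤ l x := by
  obtain ⟨b, hb⟩ := hP.exists_isSimplicialCorner hv
  obtain ⟨T, rfl⟩ := hb.exists_eq_cornerFace hF.2.2.1 hF.2.2.2 hvF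
  refine fun x hx => hb.le_of_mem_cornerFace (fun i hi => ?_) hx
  have hedge : IsEdgeOf (cornerFace P v b {i}) P := (hb.isEdgeOf_cornerFace_iff hP.1).2 (by simp)
  exact hedge.1.forall_le hP.1 (hl _ hedge (hb.mem_cornerFace _)
    (cornerFace_mono (Finset.singleton_subset_iff.2 hi)))

lemma card_eq_ncard_of_forall_mem_iff {α : Type*} {p q : α → Prop} {s : Finset {x // p x}}
    (hs : ∀ x, x ∈ s ↔ q x) : s.card = {x | p x ∧ q x}.ncard := by
  rw [← ncard_coe_finset, ← ncard_image_of_injective _ Subtype.val_injective]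
  congr 1
  ext x
  simp [hs, and_comm]

end FaceCounts

/-! ### The cubic map of a simple 3-polytope -/

section SimplePolytope

variable {P : Set E3}

lemma IsPolytope.isFaceOf_self (hP : IsPolytope P) (hne : P.Nonempty) : IsFaceOf P P :=
  ⟨hne, hP.isCompact.isClosed, hP.convex, .refl ℝ P⟩

lemma isLocalMin_toDual_comp_iff {V E F : Type*} [Fintype V] [Fintype E] [Fintype F]
    {C : CubicMap V E F} {h : V → ℝ} {S : Finset E} {v : V} :
    C.IsLocalMin (OrderDual.toDual ∘ h) S v ↔ C.IsLocalMin (-h) S v := by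
  simp [CubicMap.IsLocalMin, CubicMap.Ascends]

namespace IsSimplePolytope3

variable [Fintype {v // v ∈ P.extremePoints ℝ}] [Fintype {e // IsEdgeOf e P}]
  [Fintype {F // IsFacetOf F P}]

open scoped Classical in
/-- The incidence structure of the vertices, edges and facets of a simple 3-polytope. -/
def cubicMap (hP : IsSimplePolytope3 P) :
    CubicMap {v // v ∈ P.extremePoints ℝ} {e // IsEdgeOf e P} {F // IsFacetOf F P} where
  ends e := Finset.univ.filter fun v => v.1 ∈ e.1
  sides e := Finset.univ.filter fun F => e.1 ⊆ F.1
  card_ends e := by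
    exact (card_eq_ncard_of_forall_mem_iff (by simp)).trans (e.2.ncard_extremePoints_inter hP.1)
  card_sides e := by
    obtain ⟨v, hve, hv⟩ := e.2.1.inter_extremePoints_nonempty hP.1
    obtain ⟨b, hb⟩ := hP.exists_isSimplicialCorner hv
    exact (card_eq_ncard_of_forall_mem_iff (by simp)).trans
      (hb.ncard_facets_of_isEdgeOf hP.1 e.2 hve)
  card_star v := by
    obtain ⟨b, hb⟩ := hP.exists_isSimplicialCorner v.2
    exact (card_eq_ncard_of_forall_mem_iff (by simp)).trans (hb.ncard_edges hP.1)
  card_corner v F h := by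
    obtain ⟨e, hve, heF⟩ := h
    obtain ⟨b, hb⟩ := hP.exists_isSimplicialCorner v.2
    simp only [Finset.mem_filter_univ] at hve heF
    exact (card_eq_ncard_of_forall_mem_iff (by simp)).trans
      (hb.ncard_edges_of_isFacetOf hP.1 F.2 (heF hve))
  exists_mem_sides F := by
    obtain ⟨v, hvF, hv⟩ := F.2.1.inter_extremePoints_nonempty hP.1
    obtain ⟨b, hb⟩ := hP.exists_isSimplicialCorner hv
    have hcard := hb.ncard_edges_of_isFacetOf hP.1 F.2 hvF
    obtain ⟨e, he, -, heF⟩ := nonempty_of_ncard_ne_zero (by rw [hcard]; exact two_ne_zero)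
    exact ⟨⟨e, he⟩, by simpa using heF⟩

variable (hP : IsSimplePolytope3 P) {v w : {v // v ∈ P.extremePoints ℝ}} {e : {e // IsEdgeOf e P}}
  {F : {F // IsFacetOf F P}} {l : E3 →ₗ[ℝ] ℝ}

lemma mem_ends_cubicMap : v ∈ hP.cubicMap.ends e ↔ v.1 ∈ e.1 := by simp [cubicMap]

lemma mem_sides_cubicMap : F ∈ hP.cubicMap.sides e ↔ e.1 ⊆ F.1 := by simp [cubicMap]

lemma mem_boundary_cubicMap : e ∈ hP.cubicMap.boundary F ↔ e.1 ⊆ F.1 :=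
  CubicMap.mem_boundary.trans hP.mem_sides_cubicMap

lemma mem_of_mem_corners_cubicMap (h : v ∈ hP.cubicMap.corners F) : v.1 ∈ F.1 := by
  obtain ⟨e, hve, heF⟩ := CubicMap.mem_corners.1 h
  exact hP.mem_sides_cubicMap.1 heF (hP.mem_ends_cubicMap.1 hve)

lemma le_of_isLocalMin_cubicMap {G : Set E3} {S : Finset {e // IsEdgeOf e P}}
    (hG : IsFaceOf G P) (hS : ∀ e : {e // IsEdgeOf e P}, e.1 ⊆ G → e ∈ S)
    (hv : v.1 ∈ G) (hw : w.1 ∈ G) (hmin : hP.cubicMap.IsLocalMin (fun u => l u.1) S v) :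
    l v ≤ l w :=
  hP.forall_le_of_forall_edge hG v.2 hv (fun e he hve heG u hu hue =>
    hmin ⟨e, he⟩ (hS _ heG) (hP.mem_ends_cubicMap.2 hve) ⟨u, hu⟩ (hP.mem_ends_cubicMap.2 hue))
    w.1 hw

lemma hasUniqueMinima_cubicMap (hl : InjOn l (P.extremePoints ℝ)) :
    hP.cubicMap.HasUniqueMinima fun v => l v.1 where
  eq_univ v w hv hw := by
    have hface := hP.1.isFaceOf_self ⟨v, v.2.1⟩
    exact Subtype.ext <| hl v.2 w.2 <| le_antisymm
      (hP.le_of_isLocalMin_cubicMap hface (by simp) v.2.1 w.2.1 hv)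
      (hP.le_of_isLocalMin_cubicMap hface (by simp) w.2.1 v.2.1 hw)
  eq_boundary F v hvF w hwF hv hw := by
    have hvF := hP.mem_of_mem_corners_cubicMap hvF
    have hwF := hP.mem_of_mem_corners_cubicMap hwF
    exact Subtype.ext <| hl v.2 w.2 <| le_antisymm
      (hP.le_of_isLocalMin_cubicMap F.2.1 (fun _ => hP.mem_boundary_cubicMap.2) hvF hwF hv)
      (hP.le_of_isLocalMin_cubicMap F.2.1 (fun _ => hP.mem_boundary_cubicMap.2) hwF hvF hw)

lemma isSpherical_cubicMap : hP.cubicMap.IsSpherical := by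
  obtain ⟨l, hl⟩ := exists_dual_injOn hP.1.finite_extremePoints
  have hne : P.Nonempty := (hP.1.nonempty_interior hP.2.1).mono interior_subset
  obtain ⟨v, hv⟩ := hP.1.isCompact.extremePoints_nonempty hne
  have : Nonempty {v // v ∈ P.extremePoints ℝ} := ⟨⟨v, hv⟩⟩
  have hneg : InjOn (-l) (P.extremePoints ℝ) := fun x hx y hy hxy =>
    hl hx hy (neg_injective hxy)
  have hmax := hP.hasUniqueMinima_cubicMap hneg
  refine hP.cubicMap.isSpherical_of_hasUniqueMinima (h := fun v => l v.1)
    (fun v w h => Subtype.ext (hl v.2 w.2 h)) (hP.hasUniqueMinima_cubicMap hl)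
    ⟨fun v w hv hw => ?_, fun F v hvF w hwF hv hw => ?_⟩
  · exact hmax.eq_univ v w (isLocalMin_toDual_comp_iff.1 hv) (isLocalMin_toDual_comp_iff.1 hw)
  · exact hmax.eq_boundary F v hvF w hwF (isLocalMin_toDual_comp_iff.1 hv)
      (isLocalMin_toDual_comp_iff.1 hw)

end IsSimplePolytope3

lemma IsFullerene.isFullereneMap_cubicMap [Fintype {v // v ∈ P.extremePoints ℝ}]
    [Fintype {e // IsEdgeOf e P}] [Fintype {F // IsFacetOf F P}] (hP : IsFullerene P) :
    hP.1.cubicMap.IsFullereneMap where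
  toIsSpherical := hP.1.isSpherical_cubicMap
  card_boundary F := by
    have hcard : (hP.1.cubicMap.boundary F).card = facetEdges P F :=
      card_eq_ncard_of_forall_mem_iff fun e => hP.1.mem_boundary_cubicMap
    rw [hcard]
    exact hP.2 F F.2

end SimplePolytope

/-! ### Belts -/

section Belt

variable {k : ℕ} {i j : Fin k} {P : Set E3} {B : Fin k → Set E3} {x : E3}

lemma val_nxt (i : Fin k) : (nxt i).val = if i.val + 1 = k then 0 else i.val + 1 := by
  have := i.2
  simp only [nxt]
  split_ifs with h
  · rw [h, Nat.mod_self]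
  · exact Nat.mod_eq_of_lt (by omega)

lemma nxt_injective : Function.Injective (nxt (k := k)) := fun i j h => by
  grind [val_nxt]

namespace IsBelt

lemma eq_nxt_or_eq_nxt (hB : IsBelt P B) (hij : i ≠ j) (hi : x ∈ B i) (hj : x ∈ B j) :
    j = nxt i ∨ i = nxt j := by
  obtain ⟨h3, -, -, h4⟩ := hB
  rcases h3.eq_or_lt with rfl | hk
  · have hadj : ∀ i j : Fin 3, i ≠ j → j = nxt i ∨ i = nxt j := by decide
    exact hadj i j hij
  · exact (h4 hk i j hij).1 ⟨x, hi, hj⟩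

lemma inter_nxt_nxt_eq_empty (hB : IsBelt P B) (i : Fin k) :
    B i ∩ B (nxt i) ∩ B (nxt (nxt i)) = ∅ := by
  rcases hB.1.eq_or_lt with hk | hk
  · exact hB.2.2.1 hk.symm i
  · refine eq_empty_of_forall_notMem fun x hx => ?_
    have hne : i ≠ nxt (nxt i) := by
      grind [val_nxt]
    have h := hB.eq_nxt_or_eq_nxt hne hx.1.1 hx.2
    grind [val_nxt]

lemma disjoint_edges (hB : IsBelt P B) (hij : i ≠ j) :
    Disjoint (B i ∩ B (nxt i)) (B j ∩ B (nxt j)) := by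
  refine disjoint_left.2 fun x hi hj => ?_
  rcases hB.eq_nxt_or_eq_nxt hij hi.1 hj.1 with rfl | rfl
  · exact (hB.inter_nxt_nxt_eq_empty i).subset ⟨hi, hj.2⟩
  · exact (hB.inter_nxt_nxt_eq_empty j).subset ⟨hj, hi.2⟩

end IsBelt

lemma IsFacetOf.ne_of_isEdgeOf_inter {F G : Set E3} (hF : IsFacetOf F P)
    (he : IsEdgeOf (F ∩ G) P) : F ≠ G := by
  rintro rfl
  have := hF.2.symm.trans ((inter_self F ▸ he).2)
  omega

theorem fullerene_no_four_belts_general (P : Set E3) (hP : IsFullerene P) {k : ℕ}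
    (B : Fin k → Set E3) (hB : IsBelt P B) : 5 ≤ k := by
  have hpoly : IsPolytope P := hP.1.1
  have hfaces := hpoly.finite_setOf_isFaceOf
  have : Fintype {v // v ∈ P.extremePoints ℝ} := hpoly.finite_extremePoints.fintype
  have : Fintype {e // IsEdgeOf e P} := (hfaces.subset fun e he => he.1).fintype
  have : Fintype {F // IsFacetOf F P} := (hfaces.subset fun F hF => hF.1).fintype
  have ⟨hk, ⟨hpos, hfacet, hedge⟩, _⟩ := hB
  have : Nonempty (Fin k) := ⟨⟨0, hpos⟩⟩
  have hedge := hedge (by omega)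
  rw [← Fintype.card_fin k]
  refine hP.isFullereneMap_cubicMap.five_le_card_of_cycle
    (σ := Equiv.ofBijective nxt (Finite.injective_iff_bijective.1 nxt_injective))
    (facet := fun i => ⟨B i, hfacet i⟩) (edge := fun i => ⟨B i ∩ B (nxt i), hedge i⟩)
    (fun i => ?_) fun i j hij => Finset.disjoint_left.2 fun v hi hj => ?_
  · exact hP.1.cubicMap.sides_eq_pair (hP.1.mem_sides_cubicMap.2 inter_subset_left)
      (hP.1.mem_sides_cubicMap.2 inter_subset_right) fun h =>
        (hfacet i).ne_of_isEdgeOf_inter (hedge i) (congrArg Subtype.val h)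
  · exact disjoint_left.1 (hB.disjoint_edges hij) (hP.1.mem_ends_cubicMap.1 hi)
      (hP.1.mem_ends_cubicMap.1 hj)

end Belt

/-- Fullerenes have no 4-belts. -/
theorem fullerene_no_four_belts (P : Set E3) (hP : IsFullerene P) :
    ∀ B : Fin 4 → Set E3, ¬ IsBelt P B := by
  intro B hB
  have := fullerene_no_four_belts_general P hP B hB
  omega
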